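/- arXiv:1911.03707 — 2 statements merged into one kernel-verified Lean document; each statement's English description precedes it below -/
import Mathlib

section
/- The set of natural numbers n such that every coefficient a(n,i) of (q;q)_n lies in {-1, 0, 1} is exactly {0, 1, 2, 3, 5}. -/
open Polynomial

/-- `a n i` is the coefficient of `q^i` in `(q;q)_n = ∏_{k=1}^n (1 - q^k)` over `ℤ`. -/
noncomputable def a (n i : ℕ) : ℤ :=
  (∏ k ∈ Finset.Icc 1 n, (1 - (X : Polynomial ℤ) ^ k)).coeff i

/-- `M n` is the maximum of `|a n i|` over `0 ≤ i ≤ n(n+1)/2`. -/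
noncomputable def M (n : ℕ) : ℕ :=
  (Finset.range (n * (n + 1) / 2 + 1)).sup fun i => (a n i).natAbs

/-- `L n` is the least index `i` with `|a n i| = M n`. -/
noncomputable def L (n : ℕ) : ℕ :=
  sInf {i : ℕ | (a n i).natAbs = M n}


lemma a_zero (i : ℕ) : a 0 i = if i = 0 then 1 else 0 := by
  simp [a, Polynomial.coeff_one]

lemma a_succ (n i : ℕ) :
    a (n + 1) i = a n i - if n + 1 ≤ i then a n (i - (n + 1)) else 0 := by
  unfold a
  rw [Finset.prod_Icc_succ_top (by omega), mul_sub, mul_one, coeff_sub, coeff_mul_X_pow']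

lemma a_deg (n : ℕ) : ∀ i, n * (n + 1) < 2 * i → a n i = 0 := by
  induction n with
  | zero => intro i hi; rw [a_zero, if_neg (by omega)]
  | succ n ih =>
    intro i hi
    rw [a_succ, ih i (by nlinarith)]
    split_ifs with h
    · rw [ih _ ?_]
      · simp
      · zify [h]
        zify at hi
        nlinarith
    · simp

lemma a_stable (i n : ℕ) (h : i ≤ n) : a n i = a i i := by
  induction n, h using Nat.le_induction with
  | base => rfl
  | succ n h ih => rw [a_succ, if_neg (by omega), ih, sub_zero]

/-- coefficients of the pentagonal series -/
noncomputable def e (i : ℕ) : ℤ := a i i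

/-- partial sums -/
noncomputable def E (m : ℕ) : ℤ := ∑ j ∈ Finset.range (m + 1), e j

lemma a_of_le {i n : ℕ} (h : i ≤ n) : a n i = e i := a_stable i n h

lemma E_succ (m : ℕ) : E (m + 1) = E m + e (m + 1) := by
  rw [E, Finset.sum_range_succ]; rfl

lemma a_tele (n i d : ℕ) (h : n + d ≤ i) :
    a n i = a (n + d) i + ∑ t ∈ Finset.range d, a (n + t) (i - (n + t + 1)) := by
  induction d with
  | zero => simp
  | succ d ih =>
    rw [ih (by omega), Finset.sum_range_succ, ← add_assoc n d 1, a_succ, if_pos (by omega)]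
    ring

lemma a_one (n j : ℕ) (h : j ≤ n) : a n (n + 1 + j) = e (n + 1 + j) + E j := by
  rw [a_tele n (n + 1 + j) (j + 1) (by omega), E, ← Finset.sum_range_reflect]
  congr 1
  · rw [show n + (j + 1) = n + 1 + j by omega]; rfl
  · apply Finset.sum_congr rfl
    intro t ht
    rw [Finset.mem_range] at ht
    rw [a_of_le (by omega)]
    congr 1; omega

lemma a_two (n j : ℕ) (h : j ≤ n) :
    a n (2 * n + 2 + j) = e (2 * n + 2 + j) + E (n + 1 + j)
      + ∑ t ∈ Finset.range (n + 2 + j), if 2 * t ≤ j then E (j - 2 * t) else 0 := by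
  have hE : E (n + 1 + j) = ∑ t ∈ Finset.range (n + 2 + j), e (n + 1 + j - t) := by
    rw [E, ← Finset.sum_range_reflect, show n + 1 + j + 1 = n + 2 + j by omega]
    apply Finset.sum_congr rfl
    intro t _
    congr 1; omega
  rw [a_tele n (2 * n + 2 + j) (n + 2 + j) (by omega), hE, add_assoc (e _),
    ← Finset.sum_add_distrib]
  congr 1
  · rw [show n + (n + 2 + j) = 2 * n + 2 + j by omega]; rfl
  · apply Finset.sum_congr rfl
    intro t ht
    rw [Finset.mem_range] at ht
    split_ifs with h2
    · rw [show 2 * n + 2 + j - (n + t + 1) = (n + t) + 1 + (j - 2 * t) by omega,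
        a_one _ _ (by omega)]
      congr 2; omega
    · rw [a_of_le (by omega), add_zero]
      congr 1; omega

lemma e_eq (i : ℕ) : e i = (PowerSeries.pentagonalSeries ℤ).coeff i := by
  have h := PowerSeries.coeff_prod_one_sub_X_pow_eventually_eq (R := ℤ) i
  obtain ⟨s, hs⟩ := Filter.eventually_atTop.1 h
  have h1 := hs (s ∪ Finset.range (i + s.sup id + 1)) Finset.subset_union_left
  have h2 : s ∪ Finset.range (i + s.sup id + 1) = Finset.range (i + s.sup id + 1) := by
    apply Finset.union_eq_right.2
    intro x hx
    have : x ≤ s.sup id := Finset.le_sup (f := id) hx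
    rw [Finset.mem_range]
    omega
  rw [h2] at h1
  rw [← h1, ← a_of_le (n := i + s.sup id + 1) (by omega), a, ← Polynomial.coeff_coe,
    Finset.range_eq_Ico, Finset.prod_Ico_add' (fun k => (1 - PowerSeries.X ^ k : PowerSeries ℤ))]
  congr 1
  rw [← Polynomial.coeToPowerSeries.ringHom_apply, map_prod]
  apply Finset.prod_congr
  · ext x; simp
  · intro x _
    simp
lemma e_pent (k : ℤ) : e (pentagonal k) = (k.negOnePow : ℤ) := by
  rw [e_eq, PowerSeries.coeff_pentagonalSeries_pentagonal]; rfl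

lemma negOnePow_nat (k : ℕ) : (((k : ℤ).negOnePow : ℤˣ) : ℤ) = (-1) ^ k := by
  simp [Int.negOnePow_def]

lemma e_zero {i : ℕ} (h : ∀ k : ℤ, pentagonal k ≠ i) : e i = 0 := by
  rw [e_eq, PowerSeries.coeff_pentagonalSeries_eq_zero]
  rintro ⟨k, hk⟩
  exact h k hk

def stepRow (n : ℕ) (l : List ℤ) : List ℤ :=
  List.zipWith (fun x y => x - y) l (List.replicate (n + 1) 0 ++ l)

def row : ℕ → List ℤ
  | 0 => 1 :: List.replicate 159 0
  | n + 1 => stepRow n (row n)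

def loop : ℕ → ℕ → List ℤ → Bool
  | 0, _, _ => true
  | f + 1, n, l => (n == 0 || n == 1 || n == 2 || n == 3 || n == 5 ||
      l.any (fun x => decide (1 < x.natAbs))) && loop f (n + 1) (stepRow n l)

lemma row_length (n : ℕ) : (row n).length = 160 := by
  induction n with
  | zero => simp [row]
  | succ n ih => simp [row, stepRow, ih]

lemma row_get (n : ℕ) : ∀ i (h : i < (row n).length), (row n)[i] = a n i := by
  induction n with
  | zero =>
    intro i h
    rw [a_zero]
    cases i with
    | zero => simp [row]
    | succ i => simp only [row, List.getElem_cons_succ, List.getElem_replicate]; simp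
  | succ n ih =>
    intro i h
    rw [a_succ]
    have h' := h
    rw [row_length] at h'
    simp only [row, stepRow, List.getElem_zipWith, List.getElem_append, List.length_replicate]
    rw [ih]
    congr 1
    by_cases hi : n + 1 ≤ i
    · rw [dif_neg (by omega), if_pos hi, ih]
    · rw [dif_pos (by omega), if_neg hi, List.getElem_replicate]

lemma loop_spec : ∀ f n, loop f n (row n) = true → ∀ m, n ≤ m → m < n + f →
    (m = 0 ∨ m = 1 ∨ m = 2 ∨ m = 3 ∨ m = 5) ∨ ∃ x ∈ row m, 1 < x.natAbs := by
  intro f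
  induction f with
  | zero => intro n _ m h1 h2; omega
  | succ f ih =>
    intro n h m h1 h2
    simp only [loop, Bool.and_eq_true] at h
    rcases Nat.eq_or_lt_of_le h1 with rfl | h3
    · have := h.1
      simp at this
      simpa [or_assoc] using this
    · exact ih (n + 1) h.2 m h3 (by omega)

lemma loop_true : loop 69 0 (row 0) = true := by decide +kernel

lemma small (m : ℕ) (hm : m < 69) (h : ∀ i, (a m i).natAbs ≤ 1) :
    m = 0 ∨ m = 1 ∨ m = 2 ∨ m = 3 ∨ m = 5 := by
  rcases loop_spec 69 0 loop_true m (by omega) (by omega) with h1 | ⟨x, hx, h1⟩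
  · exact h1
  · obtain ⟨i, hi, rfl⟩ := List.getElem_of_mem hx
    rw [row_get] at h1
    have := h i
    omega

lemma F_row : (∑ t ∈ Finset.range 35, ∑ j ∈ Finset.range (69 - 2 * t + 1), (row 69).getD j 0) = 4 := by
  decide +kernel

lemma F_val (n : ℕ) (h : 69 ≤ n) :
    (∑ t ∈ Finset.range (n + 2 + 69), if 2 * t ≤ 69 then E (69 - 2 * t) else 0) = 4 := by
  rw [← F_row, ← Finset.sum_subset (s₁ := Finset.range 35)]
  · apply Finset.sum_congr rfl
    intro t ht
    rw [Finset.mem_range] at ht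
    rw [if_pos (by omega), E]
    apply Finset.sum_congr rfl
    intro j hj
    rw [Finset.mem_range] at hj
    rw [List.getD_eq_getElem _ _ (by rw [row_length]; omega), row_get, a_of_le (by omega)]
  · intro t ht
    simp only [Finset.mem_range] at *
    omega
  · intro t ht ht'
    simp only [Finset.mem_range] at *
    rw [if_neg (by omega)]

lemma e_bound (i : ℕ) : |e i| ≤ 1 := by
  by_cases h : ∃ k : ℤ, pentagonal k = i
  · obtain ⟨k, rfl⟩ := h
    rw [e_pent]
    rcases Int.even_or_odd k with hk | hk
    · simp [Int.negOnePow_even k hk]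
    · simp [Int.negOnePow_odd k hk]
  · push Not at h
    rw [e_zero h]; simp

lemma pent_cases {i k : ℕ} (h1 : k * (3 * k + 1) < 2 * i)
    (h2 : 2 * i < (k + 1) * (3 * (k + 1) + 1)) (h3 : 2 * i ≠ (k + 1) * (3 * (k + 1) - 1)) :
    e i = 0 := by
  apply e_zero
  rintro z rfl
  have hz := two_mul_natCast_pentagonal z
  zify at h1 h2
  have h3' : 2 * (pentagonal z : ℤ) ≠ (k + 1) * (3 * k + 2) := by
    intro h; apply h3; zify
    rw [h, Nat.cast_sub (by omega)]; push_cast; ring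
  rw [hz] at h1 h2 h3'
  have hk : (0 : ℤ) ≤ k := by positivity
  generalize (k : ℤ) = k at *
  rcases le_or_gt 0 z with h | h
  · have a1 : k < z := by by_contra! h; nlinarith
    have a2 : z < k + 2 := by by_contra! h; nlinarith
    obtain rfl : z = k + 1 := by omega
    apply h3'; ring
  · have a1 : k < -z := by by_contra! h; nlinarith
    have a2 : -z < k + 1 := by by_contra! h; nlinarith
    omega

lemma E_struct (m : ℕ) : ∃ k : ℕ,
    (k * (3 * k + 1) ≤ 2 * m ∧ 2 * m < (k + 1) * (3 * k + 2) ∧ E m = (-1) ^ k) ∨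
    ((k + 1) * (3 * k + 2) ≤ 2 * m ∧ 2 * m < (k + 1) * (3 * k + 4) ∧ E m = 0) := by
  have hp : ∀ k m : ℕ, 2 * m = (k + 1) * (3 * k + 2) → e m = (-1) ^ (k + 1) := by
    intro k m h
    have : pentagonal (k + 1 : ℤ) = m := by
      have := two_mul_natCast_pentagonal (k + 1 : ℤ)
      zify at h ⊢
      linarith
    rw [← this, e_pent, show (k + 1 : ℤ) = ((k + 1 : ℕ) : ℤ) by push_cast; rfl, negOnePow_nat]
  have hq : ∀ k m : ℕ, 2 * m = (k + 1) * (3 * k + 4) → e m = (-1) ^ (k + 1) := by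
    intro k m h
    have : pentagonal (-(k + 1 : ℤ)) = m := by
      have := two_mul_natCast_pentagonal (-(k + 1 : ℤ))
      zify at h ⊢
      linarith
    rw [← this, e_pent, show (k + 1 : ℤ) = ((k + 1 : ℕ) : ℤ) by push_cast; rfl, Int.negOnePow_neg, negOnePow_nat]
  induction m with
  | zero => exact ⟨0, Or.inl ⟨by simp, by simp, by simp [E, e, a_zero]⟩⟩
  | succ m ih =>
    rw [E_succ]
    have par : ∀ k : ℕ, Even ((k + 1) * (3 * k + 2)) ∧ Even ((k + 1) * (3 * k + 4)) := by
      intro k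
      rcases Nat.even_or_odd k with h | h <;> constructor <;> simp [h, parity_simps]
    obtain ⟨k, ⟨h1, h2, h3⟩ | ⟨h1, h2, h3⟩⟩ := ih
    · obtain ⟨c, hc⟩ := (par k).1
      rcases Nat.lt_or_ge (2 * (m + 1)) ((k + 1) * (3 * k + 2)) with h | h
      · refine ⟨k, Or.inl ⟨by omega, h, ?_⟩⟩
        rw [pent_cases (k := k) (by omega) (by nlinarith) ?_, h3, add_zero]
        rw [show 3 * (k + 1) - 1 = 3 * k + 2 by omega]
        omega
      · refine ⟨k, Or.inr ⟨h, by nlinarith, ?_⟩⟩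
        rw [hp k (m + 1) (by omega), h3]; ring
    · obtain ⟨c, hc⟩ := (par k).2
      rcases Nat.lt_or_ge (2 * (m + 1)) ((k + 1) * (3 * k + 4)) with h | h
      · refine ⟨k, Or.inr ⟨by omega, h, ?_⟩⟩
        rw [pent_cases (k := k) (by nlinarith) (by linarith) ?_, h3, add_zero]
        rw [show 3 * (k + 1) - 1 = 3 * k + 2 by omega]
        omega
      · refine ⟨k + 1, Or.inl ⟨by linarith, by nlinarith, ?_⟩⟩
        rw [hq k (m + 1) (by omega), h3]; ring

lemma E_bound (m : ℕ) : |E m| ≤ 1 := by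
  obtain ⟨k, ⟨_, _, h⟩ | ⟨_, _, h⟩⟩ := E_struct m <;> rw [h] <;> simp

lemma row_small : ∀ n ∈ [0, 1, 2, 3, 5], ∀ x ∈ row n, x = -1 ∨ x = 0 ∨ x = 1 := by
  decide +kernel

/-- The set of `n` such that all coefficients of `(q;q)_n` lie in `{-1, 0, 1}`
is exactly `{0, 1, 2, 3, 5}`. -/
theorem stmt_3 :
    {n : ℕ | ∀ i : ℕ, a n i ∈ ({-1, 0, 1} : Set ℤ)} = ({0, 1, 2, 3, 5} : Set ℕ) := by
  ext n
  simp only [Set.mem_ofPred_eq, Set.mem_insert_iff, Set.mem_singleton_iff]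
  constructor
  · intro h
    have h' : ∀ i, (a n i).natAbs ≤ 1 := by
      intro i
      have := h i
      omega
    rcases Nat.lt_or_ge n 69 with hn | hn
    · exact small n hn h'
    · exfalso
      have h1 := a_two n 69 hn
      rw [F_val n hn] at h1
      have h2 := h' (2 * n + 2 + 69)
      have h3 := abs_le.1 (e_bound (2 * n + 2 + 69))
      have h4 := abs_le.1 (E_bound (n + 1 + 69))
      omega
  · intro hn i
    rcases Nat.lt_or_ge i 160 with hi | hi
    · have hl : i < (row n).length := by rw [row_length]; exact hi
      rw [← row_get n i hl]
      exact row_small n (by simpa using hn) _ (List.getElem_mem hl)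
    · right; left
      apply a_deg
      have : n ≤ 5 := by omega
      nlinarith
end

section
/- For every even natural number n with 34 ≤ n ≤ 75000, the least index i with |a(n,i)| = M_n is i = ⌊n(n+1)/4⌋; that is, L(n) = ⌊n(n+1)/4⌋, and moreover |a(n, ⌈n(n+1)/4⌉)| = M_n as well. -/
open Polynomial

/-! ### Basics: symmetry, reduction -/

/-- the polynomial `(q;q)_n` -/
noncomputable def PP (n : ℕ) : Polynomial ℤ := ∏ k ∈ Finset.Icc 1 n, (1 - (X : Polynomial ℤ) ^ k)

lemma PP_succ (n : ℕ) : PP (n+1) = PP n * (1 - X^(n+1)) := by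
  unfold PP
  rw [Finset.prod_Icc_succ_top (by omega)]

lemma a_eq (n i : ℕ) : a n i = (PP n).coeff i := rfl

/-- degree of `PP n` -/
def NN (n : ℕ) : ℕ := n * (n+1) / 2

lemma NN_succ (n : ℕ) : NN (n+1) = NN n + (n+1) := by
  unfold NN
  have h : (n+1) * (n+1+1) = n * (n+1) + (n+1)*2 := by ring
  rw [h, Nat.add_mul_div_right _ _ (by norm_num)]

lemma two_NN (n : ℕ) : 2 * NN n = n * (n+1) := by
  induction n with
  | zero => simp [NN]
  | succ n ih => rw [NN_succ, mul_add, ih]; ring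

lemma natDegree_fac (k : ℕ) : (1 - (X : Polynomial ℤ)^k).natDegree ≤ k := by
  refine (natDegree_sub_le _ _).trans ?_
  simp

lemma PP_deg (n : ℕ) : (PP n).natDegree ≤ NN n := by
  induction n with
  | zero => simp [PP, NN]
  | succ n ih =>
    rw [PP_succ, NN_succ]
    exact natDegree_mul_le.trans (add_le_add ih (natDegree_fac _))

lemma PP_reflect (n : ℕ) : reflect (NN n) (PP n) = (-1)^n * PP n := by
  induction n with
  | zero => simp [PP, NN]
  | succ n ih =>
    have h1 : reflect (n+1) (1 - (X : Polynomial ℤ)^(n+1)) = -(1 - X^(n+1)) := by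
      rw [reflect_sub]
      have := reflect_monomial (R := ℤ) (n+1) (n+1)
      rw [this, revAt_le le_rfl]
      simp
    rw [PP_succ, NN_succ, reflect_mul _ _ (PP_deg n) (natDegree_fac _), ih, h1]
    ring

lemma a_symm (n i : ℕ) (hn : Even n) (hi : i ≤ NN n) : a n (NN n - i) = a n i := by
  have h := congrArg (fun p => p.coeff i) (PP_reflect n)
  simp only [coeff_reflect, hn.neg_one_pow, one_mul] at h
  rw [a_eq, a_eq, ← h, revAt_le hi]

lemma a_zero_of_gt (n i : ℕ) (hi : NN n < i) : a n i = 0 := by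
  rw [a_eq]; exact coeff_eq_zero_of_natDegree_lt ((PP_deg n).trans_lt hi)

lemma reduction (n : ℕ) (hn : Even n)
    (h : ∀ i < n * (n+1) / 4, (a n i).natAbs < (a n (n * (n+1) / 4)).natAbs) :
    L n = n * (n + 1) / 4 ∧ (a n ((n * (n + 1) + 3) / 4)).natAbs = M n := by
  have h2 := two_NN n
  set i0 := n * (n+1) / 4 with hi0
  have hle : ∀ i ≤ NN n, (a n i).natAbs ≤ (a n i0).natAbs := by
    intro i hi
    rcases lt_trichotomy i i0 with h3 | h3 | h3
    · exact (h i h3).le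
    · rw [h3]
    · rw [← a_symm n i hn hi]
      rcases lt_or_ge (NN n - i) i0 with h4 | h4
      · exact (h _ h4).le
      · have : NN n - i = i0 := by omega
        rw [this]
  have hM : M n = (a n i0).natAbs := by
    unfold M
    apply le_antisymm
    · apply Finset.sup_le
      intro i hi
      apply hle
      have := Finset.mem_range.1 hi
      unfold NN; omega
    · exact Finset.le_sup (f := fun i => (a n i).natAbs) (Finset.mem_range.2 (by omega))
  constructor
  · unfold L
    apply le_antisymm
    · exact Nat.sInf_le hM.symm
    · apply le_csInf ⟨i0, hM.symm⟩
      intro b hb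
      by_contra hlt
      have := h b (by omega)
      rw [Set.mem_ofPred_eq, hM] at hb
      omega
  · have : (n * (n + 1) + 3) / 4 = NN n - i0 := by omega
    rw [this, a_symm n i0 hn (by omega), hM]

/-! ### Integral representation -/

/-- the real trigonometric product -/
noncomputable def FF (n : ℕ) (θ : ℝ) : ℝ := ∏ k ∈ Finset.Icc 1 n, (2 * Real.sin (k * θ / 2))

lemma FF_succ (n : ℕ) (θ : ℝ) : FF (n+1) θ = FF n θ * (2 * Real.sin (((n+1 : ℕ) : ℝ) * θ / 2)) := by
  unfold FF
  rw [Finset.prod_Icc_succ_top (by omega)]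

lemma FF_cont (n : ℕ) : Continuous (FF n) := by
  unfold FF
  fun_prop

lemma aeval_PP (n : ℕ) (θ : ℝ) : aeval (Complex.exp (Complex.I * θ)) (PP n)
    = (-Complex.I)^n * (FF n θ : ℂ) * Complex.exp (Complex.I * (NN n : ℂ) * θ / 2) := by
  induction n with
  | zero => simp [PP, FF, NN]
  | succ n ih =>
    rw [PP_succ, map_mul, ih, FF_succ, NN_succ]
    have h1 : aeval (Complex.exp (Complex.I * θ)) (1 - (X : Polynomial ℤ)^(n+1))
      = (-Complex.I) * (2 * Complex.sin (((n+1 : ℕ) : ℂ) * θ / 2))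
        * Complex.exp (Complex.I * ((n+1 : ℕ) : ℂ) * θ / 2) := by
      simp only [map_sub, map_one, map_pow, aeval_X]
      rw [← Complex.exp_nat_mul, Complex.sin]
      have e1 : Complex.exp (((n+1 : ℕ) : ℂ) * (Complex.I * θ)) =
        Complex.exp (Complex.I * ((n+1 : ℕ) : ℂ) * θ / 2) * Complex.exp (Complex.I * ((n+1 : ℕ) : ℂ) * θ / 2) := by
        rw [← Complex.exp_add]; congr 1; ring
      have e2 : Complex.exp (-(((n+1 : ℕ) : ℂ) * θ / 2) * Complex.I) *
        Complex.exp (Complex.I * ((n+1 : ℕ) : ℂ) * θ / 2) = 1 := by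
        rw [← Complex.exp_add, ← Complex.exp_zero]; congr 1; ring
      have e3 : Complex.exp ((((n+1 : ℕ) : ℂ) * θ / 2) * Complex.I) =
        Complex.exp (Complex.I * ((n+1 : ℕ) : ℂ) * θ / 2) := by
        congr 1; ring
      rw [e1, e3]
      set E := Complex.exp (Complex.I * ((n+1 : ℕ) : ℂ) * θ / 2)
      set G := Complex.exp (-(((n+1 : ℕ) : ℂ) * θ / 2) * Complex.I)
      linear_combination Complex.I^2 * e2 + (1 - E^2) * Complex.I_sq
    rw [h1]
    have e4 : Complex.exp (Complex.I * ((NN n + (n+1) : ℕ) : ℂ) * θ / 2) =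
      Complex.exp (Complex.I * (NN n : ℂ) * θ / 2) * Complex.exp (Complex.I * ((n+1 : ℕ) : ℂ) * θ / 2) := by
      rw [← Complex.exp_add]; congr 1; push_cast; ring
    rw [e4]
    push_cast
    ring

lemma FF_eq_sum (n : ℕ) (hn : Even n) (θ : ℝ) :
    (-1)^(n/2) * FF n θ = ∑ i ∈ Finset.range (NN n + 1), (a n i : ℝ) * Real.cos ((i - (NN n : ℝ)/2) * θ) := by
  have h := aeval_PP n θ
  rw [aeval_eq_sum_range' (n := NN n + 1) (Nat.lt_succ_of_le (PP_deg n))] at h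
  have hI : (-Complex.I)^n = (((-1)^(n/2) : ℝ) : ℂ) := by
    obtain ⟨m, rfl⟩ := hn
    have : (m + m)/2 = m := by omega
    rw [this, ← two_mul, pow_mul]
    simp
  rw [hI] at h
  have h2 := congrArg (fun z => z * Complex.exp (-(Complex.I * (NN n : ℂ) * θ / 2))) h
  simp only [mul_assoc, ← Complex.exp_add] at h2
  rw [Finset.sum_mul] at h2
  have h3 := congrArg Complex.re h2
  have e0 : Complex.I * (NN n * θ) / 2 + -(Complex.I * (NN n * θ) / 2) = (0:ℂ) := by ring
  simp only [mul_div_assoc] at h3 e0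
  rw [e0, Complex.exp_zero, mul_one, ← Complex.ofReal_mul, Complex.ofReal_re, Complex.re_sum] at h3
  rw [← h3]
  apply Finset.sum_congr rfl
  intro i _
  rw [← Complex.exp_nat_mul, zsmul_eq_mul, mul_assoc, ← Complex.exp_add]
  have : (i : ℂ) * (Complex.I * θ) + -(Complex.I * (NN n * (θ/2))) = (((i - (NN n : ℝ)/2) * θ : ℝ) : ℂ) * Complex.I := by
    push_cast; ring
  have h5 : (((PP n).coeff i : ℤ) : ℂ) = ((a n i : ℝ) : ℂ) := by simp [a_eq]
  rw [this, h5, Complex.re_ofReal_mul, Complex.exp_ofReal_mul_I_re]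

lemma int_cos_int (k : ℤ) : ∫ θ in (0:ℝ)..Real.pi, Real.cos (k * θ) = if k = 0 then Real.pi else 0 := by
  split_ifs with h
  · simp [h]
  · rw [intervalIntegral.integral_comp_mul_left (fun x => Real.cos x) (by exact_mod_cast h)]
    simp [Real.sin_int_mul_pi]

lemma int_rep (n : ℕ) (hn : Even n) (j : ℕ) (hj : j ≤ NN n) :
    ∫ θ in (0:ℝ)..Real.pi, FF n θ * Real.cos (((NN n : ℝ)/2 - j) * θ) = (-1)^(n/2) * Real.pi * a n j := by
  have hs : ((-1:ℝ)^(n/2)) * (-1)^(n/2) = 1 := by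
    rw [← mul_pow]; simp
  have h1 : ∀ θ : ℝ, FF n θ * Real.cos (((NN n : ℝ)/2 - j) * θ) = ∑ i ∈ Finset.range (NN n + 1),
      ((-1)^(n/2) * (a n i : ℝ) / 2) * (Real.cos (((i - j : ℤ) : ℝ) * θ) + Real.cos (((i + j - NN n : ℤ) : ℝ) * θ)) := by
    intro θ
    have h2 := FF_eq_sum n hn θ
    have h3 : FF n θ = (-1)^(n/2) * ∑ i ∈ Finset.range (NN n + 1), (a n i : ℝ) * Real.cos ((i - (NN n : ℝ)/2) * θ) := by
      rw [← h2, ← mul_assoc, hs, one_mul]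
    rw [h3, mul_assoc, Finset.sum_mul, Finset.mul_sum]
    apply Finset.sum_congr rfl
    intro i _
    have e1 : (((i - j : ℤ) : ℝ) * θ) = ((i - (NN n : ℝ)/2) * θ) + (((NN n : ℝ)/2 - j) * θ) := by push_cast; ring
    have e2 : (((i + j - NN n : ℤ) : ℝ) * θ) = ((i - (NN n : ℝ)/2) * θ) - (((NN n : ℝ)/2 - j) * θ) := by push_cast; ring
    rw [e1, e2, Real.cos_add, Real.cos_sub]
    ring
  simp_rw [h1]
  rw [intervalIntegral.integral_finsetSum (fun i _ => (by fun_prop : Continuous _).intervalIntegrable _ _)]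
  have h4 : ∀ i ∈ Finset.range (NN n + 1), ∫ θ in (0:ℝ)..Real.pi, ((-1)^(n/2) * (a n i : ℝ) / 2) * (Real.cos (((i - j : ℤ) : ℝ) * θ) + Real.cos (((i + j - NN n : ℤ) : ℝ) * θ))
     = (if i = j then ((-1)^(n/2) * (a n i : ℝ) / 2) * Real.pi else 0) + (if i = NN n - j then ((-1)^(n/2) * (a n i : ℝ) / 2) * Real.pi else 0) := by
    intro i hi
    rw [intervalIntegral.integral_const_mul, intervalIntegral.integral_add
      ((by fun_prop : Continuous _).intervalIntegrable _ _) ((by fun_prop : Continuous _).intervalIntegrable _ _), int_cos_int, int_cos_int]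
    have c1 : ((i : ℤ) - j = 0) ↔ i = j := by omega
    have c2 : ((i : ℤ) + j - NN n = 0) ↔ i = NN n - j := by omega
    simp only [c1, c2]
    split_ifs <;> ring
  rw [Finset.sum_congr rfl h4, Finset.sum_add_distrib, Finset.sum_ite_eq', Finset.sum_ite_eq']
  rw [if_pos (Finset.mem_range.2 (by omega)), if_pos (Finset.mem_range.2 (by omega)), a_symm n j hn hj]
  ring

/-! ### Kernel computation for small `n` -/

/-- `∏_{j ≤ k} (2^(B j) - 1)` -/
def wv (B : ℕ) (k : ℕ) : ℕ :=
  Nat.rec 1 (fun k W => Nat.sub (Nat.shiftLeft W (Nat.mul B (Nat.succ k))) W) k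

/-- `∑_{i < len} 2^(B i)` -/
def ones (B len : ℕ) : ℕ := Nat.div (Nat.sub (Nat.pow (Nat.pow 2 B) len) 1) (Nat.sub (Nat.pow 2 B) 1)

/-- expected marker at the centre -/
def cent (b i0 i1 : ℕ) : ℕ :=
  Nat.mul (Nat.pow 2 (Nat.succ b)) (cond (Nat.beq i0 i1) (Nat.pow (Nat.pow 2 (b+5)) i0)
    (Nat.add (Nat.pow (Nat.pow 2 (b+5)) i0) (Nat.pow (Nat.pow 2 (b+5)) i1)))

/-- test with given data -/
def ckc (b len i0 i1 W c : ℕ) (s : Bool) : Bool :=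
  and (Nat.ble c (Nat.pow 2 b)) (and (Nat.ble (Nat.succ i1) len) (and
  (Nat.beq (Nat.land (Nat.add (Nat.mul (Nat.sub (Nat.mul 16 (Nat.pow 2 b)) c) (ones (b+5) len)) W)
      (Nat.mul (Nat.mul 30 (Nat.pow 2 b)) (ones (b+5) len)))
    (cond s (Nat.add (Nat.mul (Nat.mul 14 (Nat.pow 2 b)) (ones (b+5) len)) (cent b i0 i1))
      (Nat.mul (Nat.mul 14 (Nat.pow 2 b)) (ones (b+5) len))))
  (Nat.beq (Nat.land (Nat.sub (Nat.mul (Nat.sub (Nat.mul 16 (Nat.pow 2 b)) c) (ones (b+5) len)) W)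
      (Nat.mul (Nat.mul 30 (Nat.pow 2 b)) (ones (b+5) len)))
    (cond s (Nat.mul (Nat.mul 14 (Nat.pow 2 b)) (ones (b+5) len))
      (Nat.add (Nat.mul (Nat.mul 14 (Nat.pow 2 b)) (ones (b+5) len)) (cent b i0 i1))))))

/-- the central digit -/
def cdig (B i0 W : ℕ) : ℕ :=
  Nat.div (Nat.land W (Nat.mul (Nat.sub (Nat.pow 2 B) 1) (Nat.pow (Nat.pow 2 B) i0))) (Nat.pow (Nat.pow 2 B) i0)

/-- the threshold, read off from the central digit -/
def thr (B i0 W : ℕ) (s : Bool) : ℕ :=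
  cond s (cdig B i0 W) (Nat.sub (Nat.sub (Nat.pow 2 B) 1) (cdig B i0 W))

/-- test for `n` -/
def ck (b len n : ℕ) : Bool :=
  and (Nat.ble (Nat.succ (Nat.div (Nat.mul n (Nat.succ n)) 2)) len)
  (ckc b len (Nat.div (Nat.mul n (Nat.succ n)) 4)
    (Nat.sub (Nat.div (Nat.mul n (Nat.succ n)) 2) (Nat.div (Nat.mul n (Nat.succ n)) 4))
    (wv (b+5) n) (thr (b+5) (Nat.div (Nat.mul n (Nat.succ n)) 4) (wv (b+5) n) (Nat.beq (Nat.mod n 4) 0))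
    (Nat.beq (Nat.mod n 4) 0))

/-- test for `lo, lo+2, …` (`cnt` values) -/
def allck (b len lo cnt : ℕ) : Bool :=
  Nat.rec true (fun m r => and (ck b len (Nat.add lo (Nat.mul 2 m))) r) cnt

lemma allck_spec (b len lo cnt : ℕ) (h : allck b len lo cnt = true) :
    ∀ m < cnt, ck b len (lo + 2*m) = true := by
  induction cnt with
  | zero => intro m hm; omega
  | succ k ih =>
    have h' : (ck b len (lo + 2*k) && allck b len lo k) = true := h
    rw [Bool.and_eq_true] at h'
    intro m hm
    rcases Nat.lt_succ_iff_lt_or_eq.1 hm with h3 | h3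
    · exact ih h'.2 m h3
    · rw [h3]; exact h'.1

theorem chunk1 : allck 94 46000 34 133 = true := by decide +kernel

theorem chunk2 : allck 130 102000 300 75 = true := by decide +kernel

theorem chunk3 : allck 152 143000 450 42 = true := by decide +kernel

theorem chunk4 : allck 168 181000 534 34 = true := by decide +kernel

/-! ### Soundness of the kernel computation -/

lemma ones_eq (B len : ℕ) (hB : 0 < B) : ones B len = ∑ i ∈ Finset.range len, (2^B)^i := by
  have h2 : 2 ≤ 2^B := by
    calc 2 = 2^1 := by norm_num
      _ ≤ 2^B := Nat.pow_le_pow_right (by norm_num) hB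
  rw [Nat.geomSum_eq h2]
  rfl

lemma wv_succ (B k : ℕ) : wv B (k+1) = wv B k * 2^(B*(k+1)) - wv B k := by
  change (wv B k) <<< (B*(k+1)) - wv B k = _
  rw [Nat.shiftLeft_eq]

lemma wv_eq (B k : ℕ) : (wv B k : ℤ) = (-1)^k * (PP k).eval (2^B) := by
  induction k with
  | zero => simp [wv, PP]
  | succ k ih =>
    rw [wv_succ, PP_succ]
    have : wv B k ≤ wv B k * 2^(B*(k+1)) := Nat.le_mul_of_pos_right _ (by positivity)
    push_cast [this]
    rw [ih]
    simp only [eval_mul, eval_sub, eval_one, eval_pow, eval_X]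
    rw [pow_mul]
    ring

lemma wv_sum (B n len : ℕ) (hn : Even n) (hl : NN n < len) :
    (wv B n : ℤ) = ∑ i ∈ Finset.range len, a n i * (2^B)^i := by
  rw [wv_eq, hn.neg_one_pow, one_mul, eval_eq_sum_range' (lt_of_le_of_lt (PP_deg n) hl)]
  rfl

lemma sum_digit_lt (K len : ℕ) (f : ℕ → ℕ) (hf : ∀ i, f i < K) :
    ∑ i ∈ Finset.range len, f i * K^i < K^len := by
  induction len with
  | zero => simp
  | succ k ih =>
    rw [Finset.sum_range_succ]
    have := hf k
    calc _ < K^k + f k * K^k := by omega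
      _ = (f k + 1) * K^k := by ring
      _ ≤ K * K^k := Nat.mul_le_mul_right _ this
      _ = K^(k+1) := by ring

lemma digit_sum (K len : ℕ) (f : ℕ → ℕ) (hf : ∀ i, f i < K) (j : ℕ) (hj : j < len) :
    (∑ i ∈ Finset.range len, f i * K^i) / K^j % K = f j := by
  have hK : 0 < K := lt_of_le_of_lt (Nat.zero_le _) (hf 0)
  obtain ⟨r, rfl⟩ : ∃ r, len = (j + 1) + r := ⟨len - (j+1), by omega⟩
  rw [Finset.sum_range_add, Finset.sum_range_succ]
  have h1 : ∑ x ∈ Finset.range r, f (j+1+x) * K^(j+1+x) = K^j * (K * ∑ x ∈ Finset.range r, f (j+1+x) * K^x) := by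
    rw [Finset.mul_sum, Finset.mul_sum]
    apply Finset.sum_congr rfl
    intro x _
    rw [pow_add, pow_succ]; ring
  rw [h1]
  have h2 := sum_digit_lt K j f hf
  have h3 : ∑ x ∈ Finset.range j, f x * K ^ x + f j * K ^ j + K^j * (K * ∑ x ∈ Finset.range r, f (j+1+x) * K^x)
    = ∑ x ∈ Finset.range j, f x * K ^ x + K^j * (f j + K * ∑ x ∈ Finset.range r, f (j+1+x) * K^x) := by ring
  rw [h3, Nat.add_mul_div_left _ _ (by positivity), Nat.div_eq_of_lt h2, zero_add, Nat.add_mul_mod_self_left,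
    Nat.mod_eq_of_lt (hf j)]

lemma land_digit (B Z m i : ℕ) : (Z &&& m) / (2^B)^i % 2^B = (Z / (2^B)^i % 2^B) &&& (m / (2^B)^i % 2^B) := by
  rw [← pow_mul, Nat.and_div_two_pow, Nat.and_mod_two_pow]

lemma land_small : ∀ x < 32, (x &&& 30 = 14 → x < 16) ∧ (x &&& 30 = 16 → 16 ≤ x ∧ x < 18) := by decide

lemma digits_of_land (b len Z : ℕ) (f : ℕ → ℤ) (hf : ∀ i, 0 ≤ f i ∧ f i < 32 * 2^b)
    (hZ : (Z : ℤ) = ∑ i ∈ Finset.range len, f i * (2^(b+5))^i)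
    (e : ℕ → ℕ) (he : ∀ i, e i = 14 ∨ e i = 16)
    (hl : Nat.land Z (30 * 2^b * ones (b+5) len) = ∑ i ∈ Finset.range len, (e i * 2^b) * (2^(b+5))^i) :
    ∀ i < len, (e i = 14 → f i < 16 * 2^b) ∧ (e i = 16 → 16 * 2^b ≤ f i ∧ f i < 18 * 2^b) := by
  intro i hi
  have hK : 2^(b+5) = 32 * 2^b := by ring
  have hT : 0 < 2^b := by positivity
  obtain ⟨g, hg⟩ : ∃ g : ℕ → ℕ, ∀ i, f i = (g i : ℤ) := ⟨fun i => (f i).toNat, fun i => by simp [(hf i).1]⟩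
  simp only [hg] at hf hZ ⊢
  have hf' : ∀ i, g i < 2^(b+5) := by
    intro i
    have := (hf i).2
    rw [hK]; exact_mod_cast this
  have hZ' : Z = ∑ i ∈ Finset.range len, g i * (2^(b+5))^i := by exact_mod_cast hZ
  have h1 := congrArg (fun z => z / (2^(b+5))^i % 2^(b+5)) hl
  change (Z &&& _) / (2^(b+5))^i % 2^(b+5) = _ at h1
  rw [land_digit, ones_eq _ _ (by omega), Finset.mul_sum, hZ', digit_sum _ _ _ hf' i hi,
    digit_sum _ _ (fun _ => 30 * 2^b) (fun _ => by rw [hK]; omega) i hi,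
    digit_sum _ _ (fun i => e i * 2^b) (fun i => by rw [hK]; rcases he i with h | h <;> rw [h] <;> omega) i hi] at h1
  have h2 := congrArg (fun z => z / 2^b) h1
  simp only [Nat.and_div_two_pow, Nat.mul_div_cancel _ hT] at h2
  have h3 := land_small (g i / 2^b) (by
    rw [Nat.div_lt_iff_lt_mul hT]; have := hf' i; rw [hK] at this; exact this)
  rw [h2] at h3
  constructor
  · intro h
    have := h3.1 h
    rw [Nat.div_lt_iff_lt_mul hT] at this
    exact_mod_cast this
  · intro h
    have := h3.2 h
    rw [Nat.div_lt_iff_lt_mul hT, Nat.le_div_iff_mul_le hT] at this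
    exact_mod_cast this

lemma cent_sum (b len i0 i1 : ℕ) (h0 : i0 < len) (h1 : i1 < len) :
    14 * 2^b * ones (b+5) len + cent b i0 i1 =
      ∑ i ∈ Finset.range len, ((if i = i0 ∨ i = i1 then 16 else 14) * 2^b) * (2^(b+5))^i := by
  have e : ∀ i, ((if i = i0 ∨ i = i1 then 16 else 14) * 2^b) * (2^(b+5))^i
      = 14 * 2^b * (2^(b+5))^i + if i = i0 ∨ i = i1 then 2^(b+1) * (2^(b+5))^i else 0 := by
    intro i; split_ifs <;> ring
  simp_rw [e]
  rw [Finset.sum_add_distrib, ← Finset.mul_sum, ones_eq _ _ (by omega)]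
  congr 1
  unfold cent
  by_cases h : i0 = i1
  · subst h
    simp only [or_self, Finset.sum_ite_eq', Finset.mem_range, h0, if_true]
    rw [show Nat.beq i0 i0 = true from Nat.beq_refl i0, cond_true]
    rfl
  · have hb : Nat.beq i0 i1 = false := by
      rw [← Bool.not_eq_true]; simpa using h
    have e2 : ∀ i, (if i = i0 ∨ i = i1 then 2^(b+1) * (2^(b+5))^i else 0) =
      (if i = i0 then 2^(b+1) * (2^(b+5))^i else 0) + (if i = i1 then 2^(b+1) * (2^(b+5))^i else 0) := by
      intro i
      by_cases h3 : i = i0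
      · have : i ≠ i1 := by omega
        simp [h3, h]
      · simp [h3]
    simp_rw [e2]
    rw [Finset.sum_add_distrib, hb, cond_false]
    simp only [Finset.sum_ite_eq', Finset.mem_range, h0, h1, if_true]
    rw [← mul_add]; rfl

lemma ckc_spec (b len i0 i1 W c : ℕ) (s : Bool) (f : ℕ → ℤ) (hf : ∀ i, |f i| ≤ 12 * 2^b)
    (hW : (W : ℤ) = ∑ i ∈ Finset.range len, f i * (2^(b+5))^i) (h01 : i0 ≤ i1)
    (h : ckc b len i0 i1 W c s = true) :
    (∀ i < len, i ≠ i0 → i ≠ i1 → |f i| < |f i0|) ∧ (∀ i < len, |f i| ≤ 3 * 2^b) := by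
  unfold ckc at h
  rw [Bool.and_eq_true, Bool.and_eq_true, Bool.and_eq_true] at h
  obtain ⟨hc, hl, hp, hm⟩ := h
  have hc' : c ≤ 2^b := Nat.le_of_ble_eq_true hc
  have hc2 : (c : ℤ) ≤ 2^b := by exact_mod_cast hc'
  have hl' : i1 + 1 ≤ len := Nat.le_of_ble_eq_true hl
  have hp' := Nat.eq_of_beq_eq_true hp
  have hm' := Nat.eq_of_beq_eq_true hm
  have hO : ((ones (b+5) len : ℕ) : ℤ) = ∑ i ∈ Finset.range len, (2^(b+5))^i := by
    rw [ones_eq _ _ (by omega)]; push_cast; rfl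
  have hT : (0:ℤ) < 2^b := by positivity
  have hoff : (((16 * 2^b - c) : ℕ) : ℤ) = 16 * 2^b - c := by
    rw [Nat.cast_sub (by omega)]; push_cast; rfl
  have hfl : ∀ i, -(12 * 2^b) ≤ f i ∧ f i ≤ 12 * 2^b := fun i => abs_le.1 (hf i)
  have hZp : ((((16 * 2^b - c) * ones (b+5) len + W) : ℕ) : ℤ) = ∑ i ∈ Finset.range len, (16 * 2^b - c + f i) * (2^(b+5))^i := by
    push_cast [hoff]
    rw [hO, hW, Finset.mul_sum, ← Finset.sum_add_distrib]
    simp_rw [add_mul]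
  have hle : W ≤ (16 * 2^b - c) * ones (b+5) len := by
    have : (0:ℤ) ≤ ((((16 * 2^b - c) * ones (b+5) len : ℕ)) : ℤ) - W := by
      push_cast [hoff]
      rw [hO, hW, Finset.mul_sum, ← Finset.sum_sub_distrib]
      apply Finset.sum_nonneg
      intro i _
      rw [← sub_mul]
      apply mul_nonneg _ (by positivity)
      have := hfl i
      linarith
    omega
  have hZm : ((((16 * 2^b - c) * ones (b+5) len - W) : ℕ) : ℤ) = ∑ i ∈ Finset.range len, (16 * 2^b - c - f i) * (2^(b+5))^i := by
    rw [Nat.cast_sub hle]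
    push_cast [hoff]
    rw [hO, hW, Finset.mul_sum, ← Finset.sum_sub_distrib]
    simp_rw [sub_mul]
  have hcent := cent_sum b len i0 i1 (by omega) (by omega)
  have hflat : 14 * 2^b * ones (b+5) len = ∑ i ∈ Finset.range len, (14 * 2^b) * (2^(b+5))^i := by
    rw [ones_eq _ _ (by omega), Finset.mul_sum]
  have hdec : ∀ i, (if i = i0 ∨ i = i1 then 16 else 14) = 14 ∨ (if i = i0 ∨ i = i1 then 16 else 14) = 16 := by
    intro i; split_ifs <;> simp
  have key : ∀ (g : ℕ → ℤ) (Z1 Z2 : ℕ), (∀ i, |g i| = |f i|) → (∀ i, -(12 * 2^b) ≤ g i ∧ g i ≤ 12 * 2^b) →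
      ((Z1 : ℤ) = ∑ i ∈ Finset.range len, (16 * 2^b - c + g i) * (2^(b+5))^i) →
      ((Z2 : ℤ) = ∑ i ∈ Finset.range len, (16 * 2^b - c - g i) * (2^(b+5))^i) →
      Nat.land Z1 (30 * 2^b * ones (b+5) len) = 14 * 2^b * ones (b+5) len + cent b i0 i1 →
      Nat.land Z2 (30 * 2^b * ones (b+5) len) = 14 * 2^b * ones (b+5) len →
      (∀ i < len, i ≠ i0 → i ≠ i1 → |f i| < |f i0|) ∧ (∀ i < len, |f i| ≤ 3 * 2^b) := by
    intro g Z1 Z2 hgf hg hZ1 hZ2 hL1 hL2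
    rw [hcent] at hL1
    rw [hflat] at hL2
    have q1 := digits_of_land b len Z1 _ (fun i => ⟨by have := hg i; linarith, by have := hg i; linarith⟩) hZ1 _ hdec hL1
    have q2 := digits_of_land b len Z2 _ (fun i => ⟨by have := hg i; linarith, by have := hg i; linarith⟩) hZ2
      (fun _ => 14) (fun _ => Or.inl rfl) hL2
    have r0 := (q1 i0 (by omega)).2 (by simp)
    have s0 : (c:ℤ) ≤ |f i0| := by rw [← hgf]; exact le_trans (by linarith [r0.1]) (le_abs_self _)
    have nc : ∀ i < len, i ≠ i0 → i ≠ i1 → |f i| < c := by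
      intro i hi h0 h1
      have t1 := (q1 i hi).1 (by simp [h0, h1])
      have t2 := (q2 i hi).1 rfl
      rw [← hgf, abs_lt]
      constructor <;> linarith
    refine ⟨fun i hi h0 h1 => lt_of_lt_of_le (nc i hi h0 h1) s0, fun i hi => ?_⟩
    by_cases h : i = i0 ∨ i = i1
    · have t1 := (q1 i hi).2 (by simp [h])
      have t2 := (q2 i hi).1 rfl
      rw [← hgf, abs_le]
      constructor <;> linarith
    · push Not at h
      have := nc i hi h.1 h.2
      linarith
  cases s with
  | true => exact key f _ _ (fun _ => rfl) hfl hZp hZm hp' hm'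
  | false =>
    refine key (fun i => - f i) _ _ (fun i => abs_neg _) (fun i => by have := hfl i; constructor <;> linarith) ?_ ?_ hm' hp'
    · exact hZm
    · simp_rw [sub_neg_eq_add]; exact hZp

lemma ck_spec (b len n : ℕ) (hn : Even n) (hb : ∀ i, |a n i| ≤ 12 * 2^b) (h : ck b len n = true) :
    (∀ i < n * (n+1) / 4, (a n i).natAbs < (a n (n * (n+1) / 4)).natAbs) ∧ (∀ i, |a n i| ≤ 3 * 2^b) := by
  unfold ck at h
  rw [Bool.and_eq_true] at h
  have h1 : n * (n+1) / 2 + 1 ≤ len := Nat.le_of_ble_eq_true h.1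
  have h4 : NN n < len := h1
  obtain ⟨h2, h3⟩ := ckc_spec b len _ _ _ _ _ (a n) hb (wv_sum (b+5) n len hn h1)
    (by change n * (n+1) / 4 ≤ n * (n+1) / 2 - n * (n+1) / 4; omega) h.2
  refine ⟨fun i hi => ?_, fun i => ?_⟩
  · have := h2 i (by omega) (by change i ≠ n * (n+1)/4; omega)
      (by change i ≠ n * (n+1) / 2 - n * (n+1) / 4; omega)
    change |a n i| < |a n (n * (n+1) / 4)| at this
    rw [Int.abs_eq_natAbs, Int.abs_eq_natAbs] at this
    exact_mod_cast this
  · rcases lt_or_ge i len with h5 | h5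
    · exact h3 i h5
    · rw [a_zero_of_gt n i (by omega)]; simp

lemma a_succ_bound (n : ℕ) (C : ℤ) (h : ∀ i, |a n i| ≤ C) : ∀ i, |a (n+1) i| ≤ 2 * C := by
  intro i
  have hC : 0 ≤ C := (abs_nonneg _).trans (h 0)
  rw [a_eq, PP_succ, mul_sub, mul_one, coeff_sub, coeff_mul_X_pow']
  have h1 := h i
  rw [a_eq] at h1
  refine (abs_sub _ _).trans ?_
  split_ifs with h2
  · have := h (i - (n+1))
    rw [a_eq] at this
    linarith
  · simp; linarith

lemma a_trivial_bound (n : ℕ) : ∀ i, |a n i| ≤ 2^n := by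
  induction n with
  | zero =>
    intro i
    simp only [a_eq, PP, Finset.Icc_eq_empty_of_lt (show (0:ℕ) < 1 by norm_num), Finset.prod_empty, coeff_one, pow_zero]
    split_ifs <;> simp
  | succ n ih =>
    intro i
    have := a_succ_bound n _ ih i
    rw [pow_succ]; linarith

lemma chunk_spec (b len lo cnt : ℕ) (hlo : Even lo) (h : allck b len lo cnt = true)
    (hb : ∀ i, |a lo i| ≤ 12 * 2^b) : ∀ m,
    (m < cnt → ∀ i < (lo+2*m) * (lo+2*m+1) / 4, (a (lo+2*m) i).natAbs < (a (lo+2*m) ((lo+2*m) * (lo+2*m+1) / 4)).natAbs) ∧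
    (m ≤ cnt → ∀ i, |a (lo+2*m) i| ≤ 12 * 2^b) := by
  have hs := allck_spec b len lo cnt h
  have hev : ∀ m, Even (lo + 2*m) := fun m => hlo.add (even_two_mul m)
  intro m
  induction m with
  | zero => exact ⟨fun hm => (ck_spec b len lo hlo hb (hs 0 hm)).1, fun _ => hb⟩
  | succ m ih =>
    have hbd : m + 1 ≤ cnt → ∀ i, |a (lo+2*(m+1)) i| ≤ 12 * 2^b := by
      intro hm
      have h3 := (ck_spec b len _ (hev m) (ih.2 (by omega)) (hs m (by omega))).2
      have h4 := a_succ_bound _ _ (a_succ_bound _ _ h3)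
      intro i
      have := h4 i
      rw [show lo + 2*(m+1) = lo + 2*m+1+1 by ring]
      linarith
    exact ⟨fun hm => (ck_spec b len _ (hev _) (hbd (by omega)) (hs _ hm)).1, hbd⟩

lemma small_n (n : ℕ) (hn : Even n) (h1 : 34 ≤ n) (h2 : n ≤ 600) :
    ∀ i < n * (n+1) / 4, (a n i).natAbs < (a n (n * (n+1) / 4)).natAbs := by
  have c1 := chunk_spec 94 46000 34 133 (by decide) chunk1 (fun i => (a_trivial_bound 34 i).trans (by norm_num))
  have c2 := chunk_spec 130 102000 300 75 (by decide) chunk2 (fun i => ((c1 133).2 le_rfl i).trans (by norm_num))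
  have c3 := chunk_spec 152 143000 450 42 (by decide) chunk3 (fun i => ((c2 75).2 le_rfl i).trans (by norm_num))
  have c4 := chunk_spec 168 181000 534 34 (by decide) chunk4 (fun i => ((c3 42).2 le_rfl i).trans (by norm_num))
  obtain ⟨k, rfl⟩ := hn
  rcases lt_or_ge k 150 with h | h
  · have := (c1 (k-17)).1 (by omega)
    rwa [show 34 + 2*(k-17) = k + k by omega] at this
  rcases lt_or_ge k 225 with h | h
  · have := (c2 (k-150)).1 (by omega)
    rwa [show 300 + 2*(k-150) = k + k by omega] at this
  rcases lt_or_ge k 267 with h | h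
  · have := (c3 (k-225)).1 (by omega)
    rwa [show 450 + 2*(k-225) = k + k by omega] at this
  · have := (c4 (k-267)).1 (by omega)
    rwa [show 534 + 2*(k-267) = k + k by omega] at this

/-! ### The peak of `FF n` -/

lemma nonneg_of_deriv {f f' : ℝ → ℝ} (hf : ∀ x, HasDerivAt f (f' x) x) (h0 : 0 ≤ f 0) {b : ℝ}
    (h : ∀ x, 0 < x → x < b → 0 ≤ f' x) : ∀ x, 0 ≤ x → x ≤ b → 0 ≤ f x := by
  intro x hx hxb
  have hm : MonotoneOn f (Set.Icc 0 b) := by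
    apply monotoneOn_of_deriv_nonneg (convex_Icc 0 b)
    · exact fun y _ => (hf y).continuousAt.continuousWithinAt
    · exact fun y _ => (hf y).differentiableAt.differentiableWithinAt
    · intro y hy
      rw [interior_Icc] at hy
      rw [(hf y).deriv]
      exact h y hy.1 hy.2
  exact h0.trans (hm ⟨le_rfl, hx.trans hxb⟩ ⟨hx, hxb⟩ hx)

lemma xcot_u (x : ℝ) (h0 : 0 ≤ x) (h1 : x ≤ Real.pi) :
    0 ≤ Real.sin x * (7 + x^2) - 7 * x * Real.cos x := by
  rcases le_or_gt x (Real.pi/2) with h | h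
  · refine nonneg_of_deriv (f := fun x => Real.sin x * (7 + x^2) - 7 * x * Real.cos x)
      (f' := fun x => x * (x * Real.cos x + 9 * Real.sin x)) (b := Real.pi/2) ?_ (by simp) ?_ x h0 h
    · intro y
      have d1 := (Real.hasDerivAt_sin y).mul (((hasDerivAt_id y).pow 2).const_add 7)
      have d2 := ((hasDerivAt_id y).const_mul 7).mul (Real.hasDerivAt_cos y)
      refine (d1.sub d2).congr_deriv ?_
      simp only [id, Pi.pow_apply, Pi.add_apply, Pi.sub_apply, Nat.cast_ofNat]; ring
    · intro y hy hy2
      have c := Real.cos_nonneg_of_neg_pi_div_two_le_of_le (x := y) (by linarith) hy2.le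
      have s := Real.sin_nonneg_of_nonneg_of_le_pi hy.le (by linarith)
      positivity
  · have c := Real.cos_nonpos_of_pi_div_two_le_of_le h.le (by linarith)
    have s := Real.sin_nonneg_of_nonneg_of_le_pi h0 h1
    have : 7 * x * Real.cos x ≤ 0 := mul_nonpos_of_nonneg_of_nonpos (by positivity) c
    have : 0 ≤ Real.sin x * (7 + x^2) := by positivity
    linarith

lemma xcot_h (x : ℝ) (h0 : 0 ≤ x) (h1 : x ≤ Real.pi) :
    0 ≤ Real.sin x * (15 - 4 * x^2) - Real.cos x * (15 * x + x^3) := by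
  refine nonneg_of_deriv (f := fun x => Real.sin x * (15 - 4 * x^2) - Real.cos x * (15 * x + x^3))
      (f' := fun x => x * (Real.sin x * (7 + x^2) - 7 * x * Real.cos x)) (b := Real.pi) ?_ (by simp) ?_ x h0 h1
  · intro y
    have d1 := (Real.hasDerivAt_sin y).mul ((((hasDerivAt_id y).pow 2).const_mul 4).const_sub 15)
    have d2 := (Real.hasDerivAt_cos y).mul (((hasDerivAt_id y).const_mul 15).add ((hasDerivAt_id y).pow 3))
    refine (d1.sub d2).congr_deriv ?_
    simp only [id, Pi.pow_apply, Pi.add_apply, Pi.sub_apply, Nat.cast_ofNat]; ring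
  · intro y hy hy2
    exact mul_nonneg hy.le (xcot_u y hy.le hy2.le)

lemma xcot_g (x : ℝ) (h0 : 0 ≤ x) (h1 : x ≤ Real.pi) :
    x * Real.cos x ≤ Real.sin x * (1 - x^2/3 - x^4/45) := by
  rw [← sub_nonneg]
  refine nonneg_of_deriv (f := fun x => Real.sin x * (1 - x^2/3 - x^4/45) - x * Real.cos x)
      (f' := fun x => x/45 * (Real.sin x * (15 - 4 * x^2) - Real.cos x * (15 * x + x^3))) (b := Real.pi) ?_ (by simp) ?_ x h0 h1
  · intro y
    have d1 := (Real.hasDerivAt_sin y).mul (((((hasDerivAt_id y).pow 2).div_const 3).const_sub 1).sub (((hasDerivAt_id y).pow 4).div_const 45))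
    have d2 := (hasDerivAt_id y).mul (Real.hasDerivAt_cos y)
    refine (d1.sub d2).congr_deriv ?_
    simp only [id, Pi.pow_apply, Pi.add_apply, Pi.sub_apply, Nat.cast_ofNat]; ring
  · intro y hy hy2
    exact mul_nonneg (by positivity) (xcot_h y hy.le hy2.le)

lemma sum_sq (n : ℕ) : ∑ k ∈ Finset.Icc 1 n, (k:ℝ)^2 = (n:ℝ)^3/3 + (n:ℝ)^2/2 + n/6 := by
  induction n with
  | zero => simp
  | succ n ih => rw [Finset.sum_Icc_succ_top (by omega), ih]; push_cast; ring

lemma sum_four (n : ℕ) : (n:ℝ)^5/5 ≤ ∑ k ∈ Finset.Icc 1 n, (k:ℝ)^4 := by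
  induction n with
  | zero => simp
  | succ n ih =>
    rw [Finset.sum_Icc_succ_top (by omega)]; push_cast
    have : (0:ℝ) ≤ n := by positivity
    nlinarith [pow_nonneg this 2, pow_nonneg this 3]

lemma ang_mem (n k : ℕ) (hk : k ∈ Finset.Icc 1 n) (θ : ℝ) (h0 : 0 ≤ θ) (h1 : θ ≤ 2 * Real.pi / n) :
    0 ≤ k * θ / 2 ∧ k * θ / 2 ≤ Real.pi := by
  rw [Finset.mem_Icc] at hk
  have hn : (0:ℝ) < n := by exact_mod_cast (by omega : 0 < n)
  have hkn : (k:ℝ) ≤ n := by exact_mod_cast hk.2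
  rw [le_div_iff₀ hn] at h1
  constructor
  · positivity
  · nlinarith

lemma FF_nonneg (n : ℕ) (θ : ℝ) (h0 : 0 ≤ θ) (h1 : θ ≤ 2 * Real.pi / n) : 0 ≤ FF n θ := by
  apply Finset.prod_nonneg
  intro k hk
  obtain ⟨a1, a2⟩ := ang_mem n k hk θ h0 h1
  have := Real.sin_nonneg_of_nonneg_of_le_pi a1 a2
  linarith

lemma sin_pos_of (n k : ℕ) (hk : k ∈ Finset.Icc 1 n) (θ : ℝ) (h0 : 0 < θ) (h1 : θ < 2 * Real.pi / n) :
    0 < Real.sin (k * θ / 2) := by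
  rw [Finset.mem_Icc] at hk
  have hn : (0:ℝ) < n := by exact_mod_cast (by omega : 0 < n)
  have hkn : (k:ℝ) ≤ n := by exact_mod_cast hk.2
  have hk0 : (0:ℝ) < k := by exact_mod_cast (by omega : 0 < k)
  rw [lt_div_iff₀ hn] at h1
  apply Real.sin_pos_of_pos_of_lt_pi
  · positivity
  · nlinarith

lemma FF_pos (n : ℕ) (θ : ℝ) (h0 : 0 < θ) (h1 : θ < 2 * Real.pi / n) : 0 < FF n θ := by
  apply Finset.prod_pos
  intro k hk
  have := sin_pos_of n k hk θ h0 h1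
  linarith

/-- existence of the maximum, and the critical point equation -/
lemma peak_exists (n : ℕ) (hn : 1 ≤ n) : ∃ θ0 : ℝ, 0 < θ0 ∧ θ0 < 2 * Real.pi / n ∧
    (∀ θ, 0 ≤ θ → θ ≤ 2 * Real.pi / n → FF n θ ≤ FF n θ0) ∧
    ∑ k ∈ Finset.Icc 1 n, (k * θ0 / 2) * (Real.cos (k * θ0 / 2) / Real.sin (k * θ0 / 2)) = 0 := by
  have hn0 : (0:ℝ) < n := by exact_mod_cast hn
  have hpos : 0 < 2 * Real.pi / n := by positivity
  obtain ⟨θ0, hm, hmax⟩ := (isCompact_Icc (a := (0:ℝ)) (b := 2 * Real.pi / n)).exists_isMaxOn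
    ⟨0, le_rfl, hpos.le⟩ (FF_cont n).continuousOn
  have hP : 0 < FF n (2 * Real.pi / n / 2) := FF_pos n _ (by positivity) (by linarith)
  have hF0 : 0 < FF n θ0 := lt_of_lt_of_le hP (hmax (show _ ∈ Set.Icc _ _ from ⟨by positivity, by linarith⟩))
  have hz0 : FF n 0 = 0 := by
    unfold FF
    apply Finset.prod_eq_zero (Finset.mem_Icc.2 ⟨le_rfl, hn⟩)
    simp
  have hz1 : FF n (2 * Real.pi / n) = 0 := by
    unfold FF
    apply Finset.prod_eq_zero (Finset.mem_Icc.2 ⟨hn, le_rfl⟩)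
    rw [show (n:ℝ) * (2 * Real.pi / n) / 2 = Real.pi by field_simp]
    simp
  have h0 : 0 < θ0 := lt_of_le_of_ne hm.1 (fun h => by rw [← h, hz0] at hF0; exact lt_irrefl _ hF0)
  have h1 : θ0 < 2 * Real.pi / n := lt_of_le_of_ne hm.2 (fun h => by rw [h, hz1] at hF0; exact lt_irrefl _ hF0)
  refine ⟨θ0, h0, h1, fun θ a1 a2 => hmax (show θ ∈ Set.Icc _ _ from ⟨a1, a2⟩), ?_⟩
  have hder : HasDerivAt (fun θ => ∑ k ∈ Finset.Icc 1 n, Real.log (Real.sin (k * θ / 2)))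
      (∑ k ∈ Finset.Icc 1 n, (Real.cos (k * θ0 / 2) * (k / 2)) / Real.sin (k * θ0 / 2)) θ0 := by
    apply HasDerivAt.fun_sum
    intro k hk
    have d0 : HasDerivAt (fun θ : ℝ => (k:ℝ) * θ / 2) ((k:ℝ)/2) θ0 := by
      have := ((hasDerivAt_id θ0).const_mul (k:ℝ)).div_const 2
      simpa using this
    exact (d0.sin).log (sin_pos_of n k hk θ0 h0 h1).ne'
  have hloc : IsLocalMax (fun θ => ∑ k ∈ Finset.Icc 1 n, Real.log (Real.sin (k * θ / 2))) θ0 := by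
    have hnh : Set.Ioo 0 (2 * Real.pi / n) ∈ nhds θ0 := Ioo_mem_nhds h0 h1
    filter_upwards [hnh] with θ hθ
    have e : ∀ θ, 0 < θ → θ < 2 * Real.pi / n → Real.log (FF n θ) =
        (∑ k ∈ Finset.Icc 1 n, Real.log 2) + ∑ k ∈ Finset.Icc 1 n, Real.log (Real.sin (k * θ / 2)) := by
      intro θ a1 a2
      unfold FF
      rw [Real.log_prod (fun k hk => by have := sin_pos_of n k hk θ a1 a2; positivity), ← Finset.sum_add_distrib]
      apply Finset.sum_congr rfl
      intro k hk
      exact Real.log_mul (by norm_num) (sin_pos_of n k hk θ a1 a2).ne'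
    have l1 := Real.log_le_log (FF_pos n θ hθ.1 hθ.2) (hmax (show θ ∈ Set.Icc _ _ from ⟨hθ.1.le, hθ.2.le⟩))
    rw [e θ hθ.1 hθ.2, e θ0 h0 h1] at l1
    simpa using l1
  have hz := hloc.hasDerivAt_eq_zero hder
  have : ∑ k ∈ Finset.Icc 1 n, (k * θ0 / 2) * (Real.cos (k * θ0 / 2) / Real.sin (k * θ0 / 2))
    = θ0 * ∑ k ∈ Finset.Icc 1 n, (Real.cos (k * θ0 / 2) * (k / 2)) / Real.sin (k * θ0 / 2) := by
    rw [Finset.mul_sum]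
    apply Finset.sum_congr rfl
    intro k _; ring
  rw [this, hz, mul_zero]

lemma peak_lower (n : ℕ) (hn : 2 ≤ n) (θ0 : ℝ) (h0 : 0 < θ0) (h1 : θ0 < 2 * Real.pi / n)
    (hc : ∑ k ∈ Finset.Icc 1 n, (k * θ0 / 2) * (Real.cos (k * θ0 / 2) / Real.sin (k * θ0 / 2)) = 0) :
    Real.pi / n ≤ θ0 := by
  by_contra hlt
  push Not at hlt
  have hn0 : (0:ℝ) < n := by exact_mod_cast (by omega : 0 < n)
  have hle : ∀ k ∈ Finset.Icc 1 n, 0 < (k * θ0 / 2) * (Real.cos (k * θ0 / 2) / Real.sin (k * θ0 / 2)) := by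
    intro k hk
    have s := sin_pos_of n k hk θ0 h0 h1
    rw [Finset.mem_Icc] at hk
    have hkn : (k:ℝ) ≤ n := by exact_mod_cast hk.2
    have hk0 : (0:ℝ) < k := by exact_mod_cast (by omega : 0 < k)
    rw [lt_div_iff₀ hn0] at hlt
    have c : 0 < Real.cos (k * θ0 / 2) := by
      apply Real.cos_pos_of_mem_Ioo
      constructor
      · have : 0 < k * θ0 / 2 := by positivity
        linarith [Real.pi_pos]
      · nlinarith
    positivity
  have := Finset.sum_pos hle ⟨1, Finset.mem_Icc.2 ⟨le_rfl, by omega⟩⟩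
  linarith

lemma peak_upper (n : ℕ) (hn : 2 ≤ n) (θ0 : ℝ) (h0 : 0 < θ0) (h1 : θ0 < 2 * Real.pi / n)
    (hc : ∑ k ∈ Finset.Icc 1 n, (k * θ0 / 2) * (Real.cos (k * θ0 / 2) / Real.sin (k * θ0 / 2)) = 0) :
    n * θ0 / 2 ≤ 2.652 := by
  by_contra hlt
  push Not at hlt
  have hn0 : (0:ℝ) < n := by exact_mod_cast (by omega : 0 < n)
  have h2 : ∑ k ∈ Finset.Icc 1 n, (k * θ0 / 2) * (Real.cos (k * θ0 / 2) / Real.sin (k * θ0 / 2))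
      ≤ ∑ k ∈ Finset.Icc 1 n, (1 - (k * θ0 / 2)^2/3 - (k * θ0 / 2)^4/45) := by
    apply Finset.sum_le_sum
    intro k hk
    have s := sin_pos_of n k hk θ0 h0 h1
    obtain ⟨a1, a2⟩ := ang_mem n k hk θ0 h0.le h1.le
    rw [← mul_div_assoc, div_le_iff₀ s, mul_comm (1 - _ - _)]
    exact xcot_g _ a1 a2
  have h3 : ∑ k ∈ Finset.Icc 1 n, (1 - (k * θ0 / 2)^2/3 - (k * θ0 / 2)^4/45)
     = n - θ0^2/12 * ∑ k ∈ Finset.Icc 1 n, (k:ℝ)^2 - θ0^4/720 * ∑ k ∈ Finset.Icc 1 n, (k:ℝ)^4 := by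
    rw [Finset.sum_sub_distrib, Finset.sum_sub_distrib, Finset.mul_sum, Finset.mul_sum]
    simp only [Finset.sum_const, Nat.card_Icc, nsmul_eq_mul, mul_one, Nat.add_sub_cancel]
    congr 1
    · congr 1
      apply Finset.sum_congr rfl; intro k _; ring
    · apply Finset.sum_congr rfl; intro k _; ring
  rw [h3, hc, sum_sq] at h2
  have h4 := mul_le_mul_of_nonneg_left (sum_four n) (by positivity : (0:ℝ) ≤ θ0^4/720)
  set X := n * θ0 / 2 with hX
  have e1 : θ0^2/12 * ((n:ℝ)^3/3) = n * (X^2/9) := by rw [hX]; ring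
  have e2 : θ0^4/720 * ((n:ℝ)^5/5) = n * (X^4/225) := by rw [hX]; ring
  have e3 : 0 ≤ θ0^2/12 * ((n:ℝ)^2/2 + n/6) := by positivity
  have q1 : (2.652:ℝ)^2 ≤ X^2 := by gcongr
  have q2 : (2.652:ℝ)^4 ≤ X^4 := by gcongr
  have h5 : 0 ≤ n * (1 - X^2/9 - X^4/225) := by
    rw [e2] at h4
    have : θ0^2/12 * ((n:ℝ)^3/3 + (n:ℝ)^2/2 + n/6) = n * (X^2/9) + θ0^2/12 * ((n:ℝ)^2/2 + n/6) := by rw [← e1]; ring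
    rw [this] at h2
    linarith
  have h6 := nonneg_of_mul_nonneg_right h5 hn0
  norm_num at q1 q2
  linarith

lemma sin_ge_cubic (x : ℝ) (h : 0 ≤ x) : x - x^3/6 ≤ Real.sin x := by
  rw [← sub_nonneg]
  refine nonneg_of_deriv (f := fun x => Real.sin x - (x - x^3/6))
      (f' := fun x => Real.cos x - (1 - x^2/2)) (b := x) ?_ (by simp) ?_ x h le_rfl
  · intro y
    have d1 := (hasDerivAt_id y).sub (((hasDerivAt_id y).pow 3).div_const 6)
    refine ((Real.hasDerivAt_sin y).sub d1).congr_deriv ?_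
    simp only [id, Nat.cast_ofNat]; ring
  · intro y _ _
    have := Real.one_sub_sq_div_two_le_cos (x := y)
    linarith

lemma inv_sin_sq (x : ℝ) (h0 : 0 < x) (h1 : x ≤ 2.652) : 1 ≤ Real.sin x ^ 2 * (1/x^2 + 4.39) := by
  have hp := Real.pi_gt_d6
  have hp2 := Real.pi_lt_d6
  rcases le_or_gt x (Real.pi/2) with h | h
  · have hx : x ≤ 1.570797 := by linarith
    have s := sin_ge_cubic x h0.le
    have hy : x^2 ≤ 2.468 := by nlinarith
    have hs : 0 ≤ x - x^3/6 := by nlinarith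
    have h2 : (x - x^3/6)^2 ≤ Real.sin x ^2 := by gcongr
    have h3 : (x - x^3/6)^2 * (1/x^2 + 4.39) = 1 + x^2 * (4.39 - 1/3 - (4.39/3 - 1/36) * x^2 + 4.39/36 * (x^2)^2) := by
      field_simp; ring
    have h4 : 0 ≤ 4.39 - 1/3 - (4.39/3 - 1/36) * x^2 + 4.39/36 * (x^2)^2 := by nlinarith [sq_nonneg x]
    have h5 : (x - x^3/6)^2 * (1/x^2 + 4.39) ≤ Real.sin x ^2 * (1/x^2 + 4.39) := by gcongr
    have := mul_nonneg (sq_nonneg x) h4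
    linarith
  · have s1 : Real.sin 0.4895 ≤ Real.sin (Real.pi - x) :=
      Real.sin_le_sin_of_le_of_le_pi_div_two (by linarith) (by linarith) (by linarith)
    rw [Real.sin_pi_sub] at s1
    have s2 := sin_ge_cubic 0.4895 (by norm_num)
    have s3 : 0.4699 ≤ Real.sin x := by norm_num at s1 s2 ⊢; linarith
    have s4 : (0.4699:ℝ)^2 ≤ Real.sin x ^2 := by gcongr
    have s5 : 0.1421 ≤ 1 / x^2 := by
      rw [le_div_iff₀ (by positivity)]; nlinarith
    have : (0.4699:ℝ)^2 * (0.1421 + 4.39) ≤ Real.sin x ^2 * (1/x^2 + 4.39) := by gcongr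
    norm_num at this ⊢
    linarith

lemma sum_width (n : ℕ) (hn : 600 ≤ n) (θ0 : ℝ) (hl : Real.pi / n ≤ θ0) (hu : n * θ0 / 2 ≤ 2.652) :
    ∑ k ∈ Finset.Icc 1 n, (k:ℝ)^2 / (4 * Real.sin (k * θ0 / 2)^2) ≤ 0.47 * (n:ℝ)^3 := by
  have hn0 : (600:ℝ) ≤ n := by exact_mod_cast hn
  have hp := Real.pi_gt_d6
  have hnp : (0:ℝ) < n := by linarith
  have h0 : 0 < θ0 := lt_of_lt_of_le (by positivity) hl
  rw [div_le_iff₀ hnp] at hl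
  have h1 : ∑ k ∈ Finset.Icc 1 n, (k:ℝ)^2 / (4 * Real.sin (k * θ0 / 2)^2) ≤
      ∑ k ∈ Finset.Icc 1 n, (1/θ0^2 + 1.0975 * (k:ℝ)^2) := by
    apply Finset.sum_le_sum
    intro k hk
    rw [Finset.mem_Icc] at hk
    have hk0 : (0:ℝ) < k := by exact_mod_cast (by omega : 0 < k)
    have hkn : (k:ℝ) ≤ n := by exact_mod_cast hk.2
    have q : k * θ0 / 2 ≤ 2.652 := le_trans (by gcongr) hu
    have q0 : 0 < k * θ0 / 2 := by positivity
    have s := Real.sin_pos_of_pos_of_lt_pi q0 (by linarith)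
    have := inv_sin_sq _ q0 q
    rw [div_le_iff₀ (by positivity)]
    have e : (1/θ0^2 + 1.0975 * (k:ℝ)^2) * (4 * Real.sin (k * θ0 / 2)^2)
      = (k:ℝ)^2 * (Real.sin (k * θ0 / 2)^2 * (1/(k * θ0 / 2)^2 + 4.39)) := by
      field_simp; ring
    rw [e]
    nlinarith [pow_pos hk0 2]
  refine h1.trans ?_
  rw [Finset.sum_add_distrib, ← Finset.mul_sum, sum_sq]
  simp only [Finset.sum_const, Nat.card_Icc, nsmul_eq_mul, Nat.add_sub_cancel]
  have h2 : 1/θ0^2 ≤ (n:ℝ)^2 * 0.10133 := by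
    rw [div_le_iff₀ (by positivity)]
    have : (3.141592:ℝ) ≤ θ0 * n := by linarith
    have : (3.141592:ℝ)^2 ≤ (θ0 * n)^2 := by gcongr
    nlinarith
  have h3 : (n:ℝ) * (1/θ0^2) ≤ n * ((n:ℝ)^2 * 0.10133) := by gcongr
  have h4 : (n:ℝ)^2 * 600 ≤ (n:ℝ)^3 := by nlinarith [sq_nonneg (n:ℝ)]
  have h5 : (n:ℝ) * 600 ≤ (n:ℝ)^2 := by nlinarith
  nlinarith

lemma one_sub_sum_le (s : Finset ℕ) (f : ℕ → ℝ) (h0 : ∀ i ∈ s, 0 ≤ f i) (h1 : ∀ i ∈ s, f i ≤ 1) :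
    1 - ∑ i ∈ s, f i ≤ ∏ i ∈ s, (1 - f i) := by
  classical
  induction s using Finset.induction_on with
  | empty => simp
  | insert a s ha ih =>
    rw [Finset.sum_insert ha, Finset.prod_insert ha]
    have i1 := ih (fun i hi => h0 i (Finset.mem_insert_of_mem hi)) (fun i hi => h1 i (Finset.mem_insert_of_mem hi))
    have a0 := h0 a (Finset.mem_insert_self _ _)
    have a1 := h1 a (Finset.mem_insert_self _ _)
    have s0 : 0 ≤ ∑ i ∈ s, f i := Finset.sum_nonneg (fun i hi => h0 i (Finset.mem_insert_of_mem hi))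
    nlinarith [mul_le_mul_of_nonneg_left i1 (by linarith : 0 ≤ 1 - f a), mul_nonneg a0 s0]

lemma width (n : ℕ) (hn : 600 ≤ n) (θ0 : ℝ) (hl : Real.pi / n ≤ θ0) (hu : n * θ0 / 2 ≤ 2.652) (t : ℝ)
    (ht1 : 0.47 * (n:ℝ)^3 * t^2 ≤ 1) (hm : 0 ≤ θ0 - t) (hm1 : θ0 - t ≤ 2 * Real.pi / n)
    (hq0 : 0 ≤ θ0 + t) (hq : θ0 + t ≤ 2 * Real.pi / n) :
    2 * FF n θ0 * (1 - 0.47 * (n:ℝ)^3 * t^2) ≤ FF n (θ0 - t) + FF n (θ0 + t) := by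
  have hnp : (0:ℝ) < n := by exact_mod_cast (by omega : 0 < n)
  have h0 : 0 < θ0 := lt_of_lt_of_le (by positivity) hl
  have hp := Real.pi_gt_d6
  have h1 : θ0 < 2 * Real.pi / n := by
    rw [lt_div_iff₀ hnp]; linarith
  have hs := sum_width n hn θ0 hl hu
  set s : ℕ → ℝ := fun k => Real.sin (k * t / 2)^2 / Real.sin (k * θ0 / 2)^2 with hsdef
  have s0 : ∀ k ∈ Finset.Icc 1 n, 0 ≤ s k := fun k _ => by simp only [hsdef]; positivity
  have hsum : ∑ k ∈ Finset.Icc 1 n, s k ≤ 0.47 * (n:ℝ)^3 * t^2 := by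
    refine le_trans ?_ (mul_le_mul_of_nonneg_right hs (sq_nonneg t))
    rw [Finset.sum_mul]
    apply Finset.sum_le_sum
    intro k hk
    have sp := sin_pos_of n k hk θ0 h0 h1
    have e : (k:ℝ)^2 / (4 * Real.sin (k * θ0 / 2)^2) * t^2 = (k * t / 2)^2 / Real.sin (k * θ0 / 2)^2 := by
      field_simp; ring
    rw [e]
    simp only [hsdef]
    have : Real.sin (k * t / 2)^2 ≤ (k * t / 2)^2 := by
      rw [sq_le_sq]; exact Real.abs_sin_le_abs
    gcongr
  have s1 : ∀ k ∈ Finset.Icc 1 n, s k ≤ 1 := fun k hk =>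
    (Finset.single_le_sum s0 hk).trans (hsum.trans ht1)
  have hprod : FF n (θ0 - t) * FF n (θ0 + t) = FF n θ0 ^2 * ∏ k ∈ Finset.Icc 1 n, (1 - s k) := by
    unfold FF
    rw [← Finset.prod_mul_distrib, ← Finset.prod_pow, ← Finset.prod_mul_distrib]
    apply Finset.prod_congr rfl
    intro k hk
    have sp := sin_pos_of n k hk θ0 h0 h1
    simp only [hsdef]
    have e1 : (k:ℝ) * (θ0 - t) / 2 = k * θ0 / 2 - k * t / 2 := by ring
    have e2 : (k:ℝ) * (θ0 + t) / 2 = k * θ0 / 2 + k * t / 2 := by ring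
    rw [e1, e2, Real.sin_sub, Real.sin_add]
    field_simp
    have c1 := Real.sin_sq_add_cos_sq (k * θ0 / 2)
    have c2 := Real.sin_sq_add_cos_sq (k * t / 2)
    linear_combination (Real.sin (k*θ0/2))^2 * c2 - (Real.sin (k*t/2))^2 * c1
  have hpr := one_sub_sum_le _ s s0 s1
  have hA := FF_nonneg n _ hm hm1
  have hB := FF_nonneg n _ hq0 hq
  have hF := FF_pos n θ0 h0 h1
  set q := 0.47 * (n:ℝ)^3 * t^2 with hqd
  have hq0 : 0 ≤ q := by positivity
  have h5 : FF n θ0 ^2 * (1 - q) ≤ FF n (θ0 - t) * FF n (θ0 + t) := by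
    rw [hprod]
    exact mul_le_mul_of_nonneg_left (by linarith) (by positivity)
  have h6 : (1 - q)^2 ≤ 1 - q := by nlinarith
  apply le_of_sq_le_sq _ (by positivity)
  have h7 : FF n θ0 ^2 * (1 - q)^2 ≤ FF n θ0 ^2 * (1 - q) := mul_le_mul_of_nonneg_left h6 (by positivity)
  nlinarith [sq_nonneg (FF n (θ0 - t) - FF n (θ0 + t))]

lemma mass (n : ℕ) (hn : 600 ≤ n) (θ0 : ℝ) (hl : Real.pi / n ≤ θ0) (hu : n * θ0 / 2 ≤ 2.652)
    (g : ℝ → ℝ) (hg : Continuous g) (γ : ℝ) (hγ : 0 ≤ γ) (hg0 : ∀ θ, 0 ≤ θ → θ ≤ 2 * Real.pi / n → 0 ≤ g θ)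
    (hgw : ∀ θ, θ0 - 0.06 / n ≤ θ → θ ≤ θ0 + 0.06 / n → γ ≤ g θ) :
    γ * (1.94 * FF n θ0 / (n * Real.sqrt n)) ≤ ∫ θ in (0:ℝ)..(2 * Real.pi / n), FF n θ * g θ := by
  have hn0 : (600:ℝ) ≤ n := by exact_mod_cast hn
  have hnp : (0:ℝ) < n := by linarith
  have hp := Real.pi_gt_d6
  have h0 : 0 < θ0 := lt_of_lt_of_le (by positivity) hl
  have h1 : θ0 < 2 * Real.pi / n := by
    rw [lt_div_iff₀ hnp]; linarith
  have hF := FF_pos n θ0 h0 h1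
  have hsq : Real.sqrt n ^ 2 = n := Real.sq_sqrt hnp.le
  have hs : (24.4:ℝ) ≤ Real.sqrt n := Real.le_sqrt_of_sq_le (by norm_num; linarith)
  set T := n * Real.sqrt n with hT
  have hTp : 0 < T := by positivity
  have hT2 : T^2 = (n:ℝ)^3 := by rw [hT, mul_pow, hsq]; ring
  set t1 := 1.45 / T with ht1
  have ht1p : 0 < t1 := by positivity
  have ht1n : t1 ≤ 0.06 / n := by
    rw [ht1, hT, div_le_div_iff₀ hTp hnp]; nlinarith
  have e1 : (n:ℝ)^3 * t1^2 = 2.1025 := by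
    rw [← hT2, ht1]; field_simp; norm_num
  have hlm : 0 ≤ θ0 - t1 := by
    have : 0.06 / n ≤ Real.pi / n := by gcongr; linarith
    linarith
  have hrm : θ0 + t1 ≤ 2 * Real.pi / n := by
    have : θ0 ≤ 5.304 / n := by rw [le_div_iff₀ hnp]; linarith
    have : 5.304 / n + 0.06 / n ≤ 2 * Real.pi / n := by rw [← add_div]; gcongr; linarith
    linarith
  have cF := FF_cont n
  have i1 : ∀ a b : ℝ, IntervalIntegrable (fun θ => FF n θ * g θ) MeasureTheory.volume a b :=
    fun a b => (cF.mul hg).intervalIntegrable a b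
  have step1 : ∫ θ in (θ0 - t1)..(θ0 + t1), FF n θ * g θ ≤ ∫ θ in (0:ℝ)..(2 * Real.pi / n), FF n θ * g θ := by
    apply intervalIntegral.integral_mono_interval hlm (by linarith) hrm
    · apply (MeasureTheory.ae_restrict_iff' measurableSet_Ioc).2
      filter_upwards with θ hθ
      exact mul_nonneg (FF_nonneg n θ hθ.1.le hθ.2) (hg0 θ hθ.1.le hθ.2)
    · exact i1 _ _
  have step2 : ∫ θ in (θ0 - t1)..(θ0 + t1), γ * FF n θ ≤ ∫ θ in (θ0 - t1)..(θ0 + t1), FF n θ * g θ := by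
    apply intervalIntegral.integral_mono_on (by linarith) ((continuous_const.mul cF).intervalIntegrable _ _) (i1 _ _)
    intro θ hθ
    rw [mul_comm]
    exact mul_le_mul_of_nonneg_left (hgw θ (by linarith [hθ.1]) (by linarith [hθ.2])) (FF_nonneg n θ (by linarith [hθ.1]) (by linarith [hθ.2]))
  have step3 : ∫ θ in (θ0 - t1)..(θ0 + t1), FF n θ = ∫ t in (0:ℝ)..t1, (FF n (θ0 - t) + FF n (θ0 + t)) := by
    have c1 : Continuous (fun t => FF n (θ0 - t)) := cF.comp (by fun_prop)
    have c2 : Continuous (fun t => FF n (θ0 + t)) := cF.comp (by fun_prop)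
    rw [intervalIntegral.integral_add (c1.intervalIntegrable _ _) (c2.intervalIntegrable _ _),
      intervalIntegral.integral_comp_sub_left (fun x => FF n x), intervalIntegral.integral_comp_add_left (fun x => FF n x)]
    simp only [sub_zero, add_zero]
    rw [intervalIntegral.integral_add_adjacent_intervals (cF.intervalIntegrable _ _) (cF.intervalIntegrable _ _)]
  have step4 : ∫ t in (0:ℝ)..t1, (2 * FF n θ0 * (1 - 0.47 * (n:ℝ)^3 * t^2)) ≤ ∫ t in (0:ℝ)..t1, (FF n (θ0 - t) + FF n (θ0 + t)) := by
    have c1 : Continuous (fun t => FF n (θ0 - t)) := cF.comp (by fun_prop)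
    have c2 : Continuous (fun t => FF n (θ0 + t)) := cF.comp (by fun_prop)
    apply intervalIntegral.integral_mono_on ht1p.le ((by fun_prop : Continuous _).intervalIntegrable _ _)
      ((c1.add c2).intervalIntegrable _ _)
    intro t ht
    apply width n hn θ0 hl hu t _ (by linarith [ht.2]) (by linarith [ht.1]) (by linarith [ht.1]) (by linarith [ht.2])
    have : t^2 ≤ t1^2 := by have := ht.1; have := ht.2; gcongr
    have : (n:ℝ)^3 * t^2 ≤ (n:ℝ)^3 * t1^2 := by gcongr
    linarith
  have step5 : ∫ t in (0:ℝ)..t1, (2 * FF n θ0 * (1 - 0.47 * (n:ℝ)^3 * t^2)) = 2 * FF n θ0 * (t1 - 0.47 * (n:ℝ)^3 * t1^3/3) := by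
    rw [intervalIntegral.integral_const_mul, intervalIntegral.integral_sub (by simp) ((by fun_prop : Continuous _).intervalIntegrable _ _),
      intervalIntegral.integral_const_mul, integral_pow]
    simp; ring_nf
    simp
  rw [intervalIntegral.integral_const_mul] at step2
  rw [step5] at step4
  rw [step3] at step2
  have e2 : t1 - 0.47 * (n:ℝ)^3 * t1^3/3 = t1 * (1 - 0.47 * 2.1025 / 3) := by
    rw [← e1]; ring
  rw [e2] at step4
  have e3 : 1.94 * FF n θ0 / T ≤ 2 * FF n θ0 * (t1 * (1 - 0.47 * 2.1025 / 3)) := by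
    rw [ht1]
    have : 2 * FF n θ0 * (1.45 / T * (1 - 0.47 * 2.1025 / 3)) = (2 * 1.45 * (1 - 0.47 * 2.1025 / 3)) * FF n θ0 / T := by ring
    rw [this]
    gcongr
    norm_num
  have e4 := mul_le_mul_of_nonneg_left (e3.trans step4) hγ
  linarith

/-! ### Lower bound for the peak value -/

lemma cos_le_quartic (x : ℝ) (h : 0 ≤ x) : Real.cos x ≤ 1 - x^2/2 + x^4/24 := by
  rw [← sub_nonneg]
  refine nonneg_of_deriv (f := fun x => 1 - x^2/2 + x^4/24 - Real.cos x)
      (f' := fun x => Real.sin x - (x - x^3/6)) (b := x) ?_ (by simp) ?_ x h le_rfl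
  · intro y
    have d1 := (((hasDerivAt_id y).pow 2).div_const 2).const_sub 1
    have d2 := ((hasDerivAt_id y).pow 4).div_const 24
    refine ((d1.add d2).sub (Real.hasDerivAt_cos y)).congr_deriv ?_
    simp only [id, Nat.cast_ofNat]; ring
  · intro y hy _
    have := sin_ge_cubic y hy.le
    linarith

lemma sin_le_quintic (x : ℝ) (h : 0 ≤ x) : Real.sin x ≤ x - x^3/6 + x^5/120 := by
  rw [← sub_nonneg]
  refine nonneg_of_deriv (f := fun x => x - x^3/6 + x^5/120 - Real.sin x)
      (f' := fun x => 1 - x^2/2 + x^4/24 - Real.cos x) (b := x) ?_ (by simp) ?_ x h le_rfl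
  · intro y
    have d1 := (hasDerivAt_id y).sub (((hasDerivAt_id y).pow 3).div_const 6)
    have d2 := ((hasDerivAt_id y).pow 5).div_const 120
    refine ((d1.add d2).sub (Real.hasDerivAt_sin y)).congr_deriv ?_
    simp only [id, Nat.cast_ofNat]; ring
  · intro y hy _
    have := cos_le_quartic y hy.le
    linarith

lemma sin_le_exp (x : ℝ) (h : 0 ≤ x) (h1 : x ≤ 0.63) : Real.sin x ≤ x * Real.exp (-(0.163 * x^2)) := by
  have h2 := sin_le_quintic x h
  have h3 := Real.add_one_le_exp (-(0.163 * x^2))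
  have h4 : x * (-(0.163 * x^2) + 1) ≤ x * Real.exp (-(0.163 * x^2)) := by gcongr
  refine h2.trans (le_trans ?_ h4)
  have : x^2 ≤ 0.3969 := by nlinarith
  nlinarith [pow_nonneg h 3]

lemma prod_sin_all (m : ℕ) : ∏ k ∈ Finset.range m, (2 * Real.sin ((k+1 : ℕ) * (2 * Real.pi / (m+1 : ℕ)) / 2)) = m + 1 := by
  have hp := Complex.isPrimitiveRoot_exp (m+1) (by omega)
  have h := hp.prod_one_sub_pow_eq_order
  have h2 := congrArg norm h
  rw [norm_prod] at h2
  have e : ∀ k ∈ Finset.range m, ‖1 - Complex.exp (2 * Real.pi * Complex.I / ((m+1 : ℕ) : ℂ)) ^ (k+1)‖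
      = 2 * Real.sin ((k+1 : ℕ) * (2 * Real.pi / (m+1 : ℕ)) / 2) := by
    intro k hk
    rw [Finset.mem_range] at hk
    have e1 : Complex.exp (2 * Real.pi * Complex.I / ((m+1 : ℕ) : ℂ)) ^ (k+1)
      = Complex.exp (Complex.I * (((k+1 : ℕ) * (2 * Real.pi / (m+1 : ℕ)) : ℝ) : ℂ)) := by
      rw [← Complex.exp_nat_mul]; congr 1; push_cast; ring
    rw [e1, norm_sub_rev, Complex.norm_exp_I_mul_ofReal_sub_one, Real.norm_eq_abs, abs_of_nonneg]
    apply mul_nonneg (by norm_num)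
    apply Real.sin_nonneg_of_nonneg_of_le_pi
    · positivity
    · have hm : (0:ℝ) < (m+1 : ℕ) := by positivity
      have hk' : ((k+1 : ℕ) : ℝ) ≤ (m+1 : ℕ) := by exact_mod_cast (by omega)
      rw [show ((k+1 : ℕ) : ℝ) * (2 * Real.pi / (m+1 : ℕ)) / 2 = ((k+1 : ℕ) / (m+1 : ℕ)) * Real.pi by field_simp]
      have : ((k+1 : ℕ) : ℝ) / (m+1 : ℕ) ≤ 1 := by rw [div_le_one hm]; exact hk'
      nlinarith [Real.pi_pos]
  rw [Finset.prod_congr rfl e] at h2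
  rw [h2]
  have : ((m:ℂ) + 1) = ((m + 1 : ℝ) : ℂ) := by push_cast; rfl
  rw [this, Complex.norm_real, Real.norm_eq_abs, abs_of_nonneg (by positivity)]

lemma prod_Icc_range (n : ℕ) (f : ℕ → ℝ) : ∏ k ∈ Finset.Icc 1 n, f k = ∏ k ∈ Finset.range n, f (k+1) := by
  induction n with
  | zero => simp
  | succ n ih => rw [Finset.prod_Icc_succ_top (by omega), Finset.prod_range_succ, ih]

lemma sum_Icc_range (n : ℕ) (f : ℕ → ℝ) : ∑ k ∈ Finset.Icc 1 n, f k = ∑ k ∈ Finset.range n, f (k+1) := by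
  induction n with
  | zero => simp
  | succ n ih => rw [Finset.sum_Icc_succ_top (by omega), Finset.sum_range_succ, ih]

lemma FF_mul_tail (n r : ℕ) : FF n (2 * Real.pi / (n + r + 1 : ℕ)) *
    ∏ l ∈ Finset.range r, (2 * Real.sin ((l+1 : ℕ) * Real.pi / (n + r + 1 : ℕ))) = n + r + 1 := by
  have h := prod_sin_all (n + r)
  rw [Finset.prod_range_add] at h
  have hm : ((n + r + 1 : ℕ) : ℝ) ≠ 0 := by positivity
  have e1 : FF n (2 * Real.pi / (n + r + 1 : ℕ)) = ∏ k ∈ Finset.range n, (2 * Real.sin ((k+1 : ℕ) * (2 * Real.pi / (n + r+1 : ℕ)) / 2)) := by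
    unfold FF
    exact prod_Icc_range _ _
  have e2 : ∏ l ∈ Finset.range r, (2 * Real.sin ((l+1 : ℕ) * Real.pi / (n + r + 1 : ℕ))) =
      ∏ k ∈ Finset.range r, (2 * Real.sin ((n + k+1 : ℕ) * (2 * Real.pi / (n + r+1 : ℕ)) / 2)) := by
    rw [← Finset.prod_range_reflect]
    apply Finset.prod_congr rfl
    intro k hk
    rw [Finset.mem_range] at hk
    rw [← Real.sin_pi_sub]
    congr 2
    have : ((r - 1 - k + 1 : ℕ) : ℝ) = r - k := by
      rw [show r - 1 - k + 1 = r - k by omega, Nat.cast_sub hk.le]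
    rw [this]
    field_simp
    push_cast
    ring
  rw [e1, e2, h]
  push_cast; ring

lemma factorial_le (s : ℕ) (hs : 1 ≤ s) : (s.factorial : ℝ) ≤ Real.exp 1 * Real.sqrt s * (s / Real.exp 1)^s := by
  have h := Stirling.stirlingSeq'_antitone (Nat.zero_le (s-1))
  simp only [Function.comp, Nat.succ_eq_add_one, zero_add, Stirling.stirlingSeq_one] at h
  rw [show s - 1 + 1 = s by omega, Stirling.stirlingSeq] at h
  have hs0 : (0:ℝ) < s := by exact_mod_cast hs
  rw [div_le_iff₀ (by positivity)] at h
  refine h.trans (le_of_eq ?_)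
  rw [Real.sqrt_mul (by norm_num)]
  have : Real.sqrt 2 ≠ 0 := by positivity
  field_simp

lemma F0_lower (n s : ℕ) (hs : s = n / 4) (hn : 600 ≤ n) (hev : Even n) :
    1.839 * Real.sqrt s * Real.exp (0.7918 * s) ≤ FF n (2 * Real.pi / (n + s + 1 : ℕ)) := by
  have hs1 : 150 ≤ s := by omega
  have hm1 : 5 * s + 1 ≤ n + s + 1 := by omega
  have hm2 : n + s + 1 ≤ 5 * s + 3 := by obtain ⟨k, rfl⟩ := hev; omega
  set m := n + s + 1 with hm
  have hs0 : (150:ℝ) ≤ s := by exact_mod_cast hs1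
  have hm1' : 5 * (s:ℝ) + 1 ≤ m := by exact_mod_cast hm1
  have hm2' : (m:ℝ) ≤ 5 * s + 3 := by exact_mod_cast hm2
  have hm0 : (0:ℝ) < m := by linarith
  have hp := Real.pi_gt_d6
  have hp2 := Real.pi_lt_d6
  have ht := FF_mul_tail n s
  rw [← hm] at ht
  have hb : ∏ l ∈ Finset.range s, (2 * Real.sin ((l+1 : ℕ) * Real.pi / m))
      ≤ ∏ l ∈ Finset.range s, ((2 * Real.pi / m) * ((l+1 : ℕ) : ℝ) * Real.exp (-(0.163 * ((l+1 : ℕ) * Real.pi / m)^2))) := by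
    apply Finset.prod_le_prod
    · intro l hl
      rw [Finset.mem_range] at hl
      have hl' : ((l+1 : ℕ) : ℝ) ≤ m := by exact_mod_cast (by omega)
      have := Real.sin_nonneg_of_nonneg_of_le_pi (x := (l+1 : ℕ) * Real.pi / m) (by positivity) (by
        rw [div_le_iff₀ hm0]; nlinarith)
      linarith
    · intro l hl
      rw [Finset.mem_range] at hl
      have hl' : ((l+1 : ℕ) : ℝ) ≤ s := by exact_mod_cast (by omega)
      have := sin_le_exp ((l+1 : ℕ) * Real.pi / m) (by positivity) (by
        rw [div_le_iff₀ hm0]; nlinarith)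
      calc _ ≤ 2 * ((l+1 : ℕ) * Real.pi / m * Real.exp (-(0.163 * ((l+1 : ℕ) * Real.pi / m)^2))) := by linarith
        _ = _ := by ring
  have hbe : ∏ l ∈ Finset.range s, ((2 * Real.pi / m) * ((l+1 : ℕ) : ℝ) * Real.exp (-(0.163 * (((l+1 : ℕ) : ℝ) * Real.pi / m)^2)))
      = (2 * Real.pi / m)^s * (∏ l ∈ Finset.range s, ((l+1 : ℕ) : ℝ)) * Real.exp (∑ l ∈ Finset.range s, (-(0.163 * (((l+1 : ℕ) : ℝ) * Real.pi / m)^2))) := by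
    rw [Finset.prod_mul_distrib, Finset.prod_mul_distrib, ← Real.exp_sum, Finset.prod_const, Finset.card_range]
  rw [hbe] at hb
  have hfac : ∏ l ∈ Finset.range s, ((l+1 : ℕ) : ℝ) = (s.factorial : ℝ) := by
    rw [← Finset.prod_range_add_one_eq_factorial]; push_cast; rfl
  have hsumsq : ∑ l ∈ Finset.range s, ((l+1 : ℕ) : ℝ)^2 = (s:ℝ)^3/3 + (s:ℝ)^2/2 + s/6 := by
    rw [← sum_sq]
    exact (sum_Icc_range _ (fun k => (k:ℝ)^2)).symm
  have hexp : ∑ l ∈ Finset.range s, (-(0.163 * (((l+1 : ℕ) : ℝ) * Real.pi / m)^2)) ≤ -(0.0212 * (s:ℝ)) := by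
    have e : ∑ l ∈ Finset.range s, (-(0.163 * (((l+1 : ℕ) : ℝ) * Real.pi / m)^2))
       = -(0.163 * (Real.pi/m)^2) * ∑ l ∈ Finset.range s, ((l+1 : ℕ) : ℝ)^2 := by
      rw [Finset.mul_sum]; apply Finset.sum_congr rfl; intro k _; ring
    rw [e, hsumsq]
    have hr : 0.1992 ≤ s / (m:ℝ) := by rw [le_div_iff₀ hm0]; linarith
    have q1 : (0.1992:ℝ)^2 ≤ (s / (m:ℝ))^2 := by gcongr
    have q2 : (3.141592:ℝ)^2 ≤ Real.pi^2 := by gcongr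
    have q3 : (3.141592:ℝ)^2 * (0.1992:ℝ)^2 ≤ Real.pi^2 * (s / (m:ℝ))^2 := by gcongr
    have q4 : 0.163 * (Real.pi/m)^2 * ((s:ℝ)^3/3 + (s:ℝ)^2/2 + s/6) = 0.163 * (Real.pi^2 * (s / (m:ℝ))^2) * (s/3) + 0.163 * (Real.pi/m)^2 * ((s:ℝ)^2/2 + s/6) := by
      field_simp
      ring
    have q5 : 0 ≤ 0.163 * (Real.pi/m)^2 * ((s:ℝ)^2/2 + s/6) := by positivity
    have q6 : 0.163 * ((3.141592:ℝ)^2 * (0.1992:ℝ)^2) * (s/3) ≤ 0.163 * (Real.pi^2 * (s / (m:ℝ))^2) * (s/3) := by gcongr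
    have q7 : 0.0212 * (s:ℝ) ≤ 0.163 * ((3.141592:ℝ)^2 * (0.1992:ℝ)^2) * (s/3) := by nlinarith
    linarith
  rw [hfac] at hb
  have hstir := factorial_le s (by omega)
  have hE : Real.exp (-0.229) ≤ 5 / (2 * Real.pi) := by
    rw [Real.exp_neg, inv_eq_one_div, div_le_div_iff₀ (Real.exp_pos _) (by positivity)]
    have := Real.sum_le_exp_of_nonneg (x := 0.229) (by norm_num) 4
    simp only [Finset.sum_range_succ, Finset.sum_range_zero, Nat.factorial] at this
    norm_num at this
    norm_num
    linarith
  -- collect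
  have key : (2 * Real.pi / m)^s * (s.factorial : ℝ) ≤ Real.exp 1 * Real.sqrt s * Real.exp (-(0.771 * s)) := by
    have k1 : (2 * Real.pi / m)^s * (s.factorial : ℝ) ≤ (2 * Real.pi / m)^s * (Real.exp 1 * Real.sqrt s * (s / Real.exp 1)^s) := by
      gcongr
    have k2 : (2 * Real.pi / m)^s * (Real.exp 1 * Real.sqrt s * (s / Real.exp 1)^s) =
      Real.exp 1 * Real.sqrt s * (2 * Real.pi / m * (s / Real.exp 1))^s := by rw [mul_pow]; ring
    have k3 : 2 * Real.pi / m * (s / Real.exp 1) ≤ Real.exp (-0.771) := by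
      have f1 : 2 * Real.pi / m * (s / Real.exp 1) = (2 * Real.pi) * (s/m) * Real.exp (-1) := by
        rw [Real.exp_neg]; field_simp
      have f2 : (s:ℝ)/m ≤ 1/5 := by rw [div_le_div_iff₀ hm0 (by norm_num)]; linarith
      have f3 : 2 * Real.pi * (1/5) ≤ Real.exp 0.229 := by
        rw [show (0.229:ℝ) = -(-0.229) by norm_num, Real.exp_neg (-0.229), inv_eq_one_div, le_div_iff₀ (Real.exp_pos _)]
        calc 2 * Real.pi * (1/5) * Real.exp (-0.229) ≤ 2 * Real.pi * (1/5) * (5 / (2 * Real.pi)) := by gcongr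
          _ = 1 := by field_simp
      rw [f1, show (-0.771:ℝ) = 0.229 + -1 by norm_num, Real.exp_add]
      gcongr
      calc 2 * Real.pi * (s/m) ≤ 2 * Real.pi * (1/5) := by gcongr
        _ ≤ _ := f3
    have k4 : (2 * Real.pi / m * (s / Real.exp 1))^s ≤ Real.exp (-(0.771 * s)) := by
      calc _ ≤ (Real.exp (-0.771))^s := by gcongr
        _ = _ := by rw [← Real.exp_nat_mul]; congr 1; ring
    rw [k2] at k1
    refine k1.trans ?_
    gcongr
  have hfin : ∏ l ∈ Finset.range s, (2 * Real.sin ((l+1 : ℕ) * Real.pi / m)) ≤ Real.exp 1 * Real.sqrt s * Real.exp (-(0.7918 * s)) := by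
    refine hb.trans ?_
    calc _ ≤ (Real.exp 1 * Real.sqrt s * Real.exp (-(0.771 * s))) * Real.exp (-(0.0212 * s)) := by gcongr
      _ = Real.exp 1 * Real.sqrt s * Real.exp (-(0.7922 * s)) := by
        rw [mul_assoc, ← Real.exp_add]; congr 2; ring
      _ ≤ _ := by gcongr; norm_num
  have hFp : 0 < FF n (2 * Real.pi / m) := by
    apply FF_pos _ _ (by positivity)
    have : (0:ℝ) < n := by exact_mod_cast (by omega : 0 < n)
    have : (n:ℝ) < m := by exact_mod_cast (by omega : n < m)
    gcongr
  have h8 := mul_le_mul_of_nonneg_left hfin hFp.le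
  rw [ht] at h8
  have h9 : (5 * (s:ℝ)) ≤ n + s + 1 := by
    have : ((n + s + 1 : ℕ) : ℝ) = n + s + 1 := by push_cast; ring
    rw [hm] at hm1'; linarith
  have he := Real.exp_one_lt_d9
  have hsq : Real.sqrt s * Real.sqrt s = s := Real.mul_self_sqrt (by linarith)
  have hsp : 0 < Real.sqrt s := Real.sqrt_pos.2 (by linarith)
  have hx : Real.exp (0.7918 * s) * Real.exp (-(0.7918 * s)) = 1 := by rw [← Real.exp_add]; simp
  set E := Real.exp (0.7918 * s) with hEd
  set E' := Real.exp (-(0.7918 * s)) with hEd'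
  have hE0 : 0 < E := Real.exp_pos _
  have h10 : 5 * (s:ℝ) * E ≤ FF n (2 * Real.pi / m) * (Real.exp 1 * Real.sqrt s) := by
    calc 5 * (s:ℝ) * E ≤ (FF n (2 * Real.pi / m) * (Real.exp 1 * Real.sqrt s * E')) * E := mul_le_mul_of_nonneg_right (h9.trans h8) hE0.le
      _ = FF n (2 * Real.pi / m) * (Real.exp 1 * Real.sqrt s) * (E * E') := by ring
      _ = _ := by rw [hx, mul_one]
  have h11 : 5 * Real.sqrt s * E ≤ FF n (2 * Real.pi / m) * Real.exp 1 := by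
    apply le_of_mul_le_mul_right _ hsp
    calc 5 * Real.sqrt s * E * Real.sqrt s = 5 * (Real.sqrt s * Real.sqrt s) * E := by ring
      _ ≤ _ := by rw [hsq]; linarith
  have h12 : FF n (2 * Real.pi / m) * Real.exp 1 ≤ FF n (2 * Real.pi / m) * 2.7182818286 := by gcongr
  have : 0 < Real.sqrt s * E := by positivity
  linarith

/-! ### Trigonometric majorant for `log |2 sin (x/2)|` -/

lemma log_le_five (t : ℝ) (ht : 0 < t) :
    Real.log t ≤ (t-1) - (t-1)^2/2 + (t-1)^3/3 - (t-1)^4/4 + (t-1)^5/5 := by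
  set f : ℝ → ℝ := fun t => (t-1) - (t-1)^2/2 + (t-1)^3/3 - (t-1)^4/4 + (t-1)^5/5 - Real.log t with hf
  have hd : ∀ t, 0 < t → HasDerivAt f ((t-1)^5/t) t := by
    intro t ht
    have h1 : HasDerivAt (fun t : ℝ => t - 1) 1 t := (hasDerivAt_id t).sub_const 1
    have h := ((((h1.sub ((h1.pow 2).div_const 2)).add ((h1.pow 3).div_const 3)).sub ((h1.pow 4).div_const 4)).add
      ((h1.pow 5).div_const 5)).sub (Real.hasDerivAt_log ht.ne')
    refine h.congr_deriv ?_
    have := ht.ne'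
    push_cast
    field_simp
    ring
  have hc : ContinuousOn f (Set.Ioi 0) := fun t ht => (hd t ht).continuousAt.continuousWithinAt
  have hf1 : f 1 = 0 := by simp [hf]
  have key : 0 ≤ f t := by
    rcases le_total t 1 with h | h
    · have hm : AntitoneOn f (Set.Icc t 1) := by
        apply antitoneOn_of_deriv_nonpos (convex_Icc _ _)
        · exact hc.mono (fun x hx => lt_of_lt_of_le ht hx.1)
        · intro x hx
          rw [interior_Icc] at hx
          exact (hd x (ht.trans hx.1)).differentiableAt.differentiableWithinAt
        · intro x hx
          rw [interior_Icc] at hx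
          have hx0 := ht.trans hx.1
          rw [(hd x hx0).deriv]
          apply div_nonpos_of_nonpos_of_nonneg _ hx0.le
          exact (Odd.pow_nonpos_iff (by decide)).2 (by linarith [hx.2])
      have := hm ⟨le_rfl, h⟩ ⟨h, le_rfl⟩ h
      rwa [hf1] at this
    · have hm : MonotoneOn f (Set.Icc 1 t) := by
        apply monotoneOn_of_deriv_nonneg (convex_Icc _ _)
        · exact hc.mono (fun x hx => lt_of_lt_of_le one_pos hx.1)
        · intro x hx
          rw [interior_Icc] at hx
          exact (hd x (one_pos.trans hx.1)).differentiableAt.differentiableWithinAt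
        · intro x hx
          rw [interior_Icc] at hx
          have hx0 : 0 < x := one_pos.trans hx.1
          rw [(hd x hx0).deriv]
          have : 0 ≤ x - 1 := by linarith [hx.1]
          positivity
      have := hm ⟨le_rfl, h⟩ ⟨h, le_rfl⟩ h
      rwa [hf1] at this
  have : f t = (t-1) - (t-1)^2/2 + (t-1)^3/3 - (t-1)^4/4 + (t-1)^5/5 - Real.log t := rfl
  linarith

lemma log_piece (s k : ℝ) (e : ℤ) (hs : 0 < s) (hk0 : 0 < k) (hk : (4:ℝ) = k * 2^e) :
    Real.log (4*s) ≤ e * Real.log 2 + ((k*s-1) - (k*s-1)^2/2 + (k*s-1)^3/3 - (k*s-1)^4/4 + (k*s-1)^5/5) := by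
  have h := log_le_five (k*s) (by positivity)
  have : Real.log (4*s) = e * Real.log 2 + Real.log (k*s) := by
    rw [hk, show k * 2^e * s = 2^e * (k*s) by ring, Real.log_mul (by positivity) (by positivity), Real.log_zpow]
  linarith

lemma maj_poly (s : ℝ) (hs : 0 < s) (hs1 : s ≤ 1) :
    Real.log (4*s) / 2 ≤ (-16877/10000) + (66257/2500)*s^1 + (-262369/1250)*s^2 + (121702/125)*s^3 + (-1659856/625)*s^4 + (2713568/625)*s^5 + (-2613632/625)*s^6 + (1366528/625)*s^7 + (-299008/625)*s^8 := by
  have hl1 := Real.log_two_gt_d9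
  have hl2 := Real.log_two_lt_d9
  rcases le_total s (7/200) with h0 | h0
  · have h := log_piece s (32) (-3) hs (by norm_num) (by norm_num)
    have u : 0 ≤ s - 0 := sub_nonneg.2 (by linarith)
    have v : 0 ≤ 7/200 - s := sub_nonneg.2 (by linarith)
    have hb : 0 ≤ (3791518592000000000/17294403)*(7/200-s)^8
      + (15952101376000000000/17294403)*(s-0)^1*(7/200-s)^7
      + (3944567859200000000/2470629)*(s-0)^2*(7/200-s)^6
      + (3620039459840000000/2470629)*(s-0)^3*(7/200-s)^5
      + (1851612616130560000/2470629)*(s-0)^4*(7/200-s)^4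
      + (475951033793331200/2470629)*(s-0)^5*(7/200-s)^3
      + (13425146984177664/823543)*(s-0)^6*(7/200-s)^2
      + (432890764249772032/144120025)*(s-0)^7*(7/200-s)^1
      + (6098272684953403392/3603000625)*(s-0)^8 := by positivity
    push_cast at h
    linarith
  rcases le_total s (1/8) with h1 | h1
  · have h := log_piece s (16) (-2) hs (by norm_num) (by norm_num)
    have u : 0 ≤ s - 7/200 := sub_nonneg.2 (by linarith)
    have v : 0 ≤ 1/8 - s := sub_nonneg.2 (by linarith)
    have hb : 0 ≤ (53138518526797696/80712601875)*(1/8-s)^8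
      + (15738205855727008/645700815)*(s-7/200)^1*(1/8-s)^7
      + (32746364590229152/129140163)*(s-7/200)^2*(1/8-s)^6
      + (97407704637053600/129140163)*(s-7/200)^3*(1/8-s)^5
      + (140685361364020000/129140163)*(s-7/200)^4*(1/8-s)^4
      + (120233565945500000/129140163)*(s-7/200)^5*(1/8-s)^3
      + (63131573387500000/129140163)*(s-7/200)^6*(1/8-s)^2
      + (16393188687500000/129140163)*(s-7/200)^7*(1/8-s)^1
      + (533717687500000/129140163)*(s-7/200)^8 := by positivity
    push_cast at h
    linarith
  rcases le_total s (31/100) with h2 | h2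
  · have h := log_piece s (4) (0) hs (by norm_num) (by norm_num)
    have u : 0 ≤ s - 1/8 := sub_nonneg.2 (by linarith)
    have v : 0 ≤ 31/100 - s := sub_nonneg.2 (by linarith)
    have hb : 0 ≤ (465262000000000000/10537438361763)*(31/100-s)^8
      + (3203268680000000000/10537438361763)*(s-1/8)^1*(31/100-s)^7
      + (6784747859200000000/10537438361763)*(s-1/8)^2*(31/100-s)^6
      + (6106310507008000000/10537438361763)*(s-1/8)^3*(31/100-s)^5
      + (2143926782136320000/10537438361763)*(s-1/8)^4*(31/100-s)^4
      + (90315435743641600/10537438361763)*(s-1/8)^5*(31/100-s)^3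
      + (59213856061784064/3512479453921)*(s-1/8)^6*(31/100-s)^2
      + (389136380371664896/17562397269605)*(s-1/8)^7*(31/100-s)^1
      + (11824374179477061632/2195299658700625)*(s-1/8)^8 := by positivity
    push_cast at h
    linarith
  rcases le_total s (13/20) with h3 | h3
  · have h := log_piece s (2) (1) hs (by norm_num) (by norm_num)
    have u : 0 ≤ s - 31/100 := sub_nonneg.2 (by linarith)
    have v : 0 ≤ 13/20 - s := sub_nonneg.2 (by linarith)
    have hb : 0 ≤ (514866585608386/13079545201875)*(13/20-s)^8
      + (1667032683417304/2615909040375)*(s-31/100)^1*(13/20-s)^7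
      + (1881362847234112/523181808075)*(s-31/100)^2*(13/20-s)^6
      + (794533972907192/104636361615)*(s-31/100)^3*(13/20-s)^5
      + (108230435426420/20927272323)*(s-31/100)^4*(13/20-s)^4
      + (21309407750440/20927272323)*(s-31/100)^5*(13/20-s)^3
      + (208904559600/6975757441)*(s-31/100)^6*(13/20-s)^2
      + (675384399000/6975757441)*(s-31/100)^7*(13/20-s)^1
      + (210430838750/6975757441)*(s-31/100)^8 := by positivity
    push_cast at h
    linarith
  rcases le_total s (37/40) with h4 | h4
  · have h := log_piece s (1) (2) hs (by norm_num) (by norm_num)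
    have u : 0 ≤ s - 13/20 := sub_nonneg.2 (by linarith)
    have v : 0 ≤ 37/40 - s := sub_nonneg.2 (by linarith)
    have hb : 0 ≤ (64091293351936/401922901875)*(37/40-s)^8
      + (789184514256896/401922901875)*(s-13/20)^1*(37/40-s)^7
      + (4010254130163712/401922901875)*(s-13/20)^2*(37/40-s)^6
      + (9804230389700608/401922901875)*(s-13/20)^3*(37/40-s)^5
      + (2269940795613184/80384580375)*(s-13/20)^4*(37/40-s)^4
      + (4964525705504512/401922901875)*(s-13/20)^5*(37/40-s)^3
      + (10082025789184/133974300625)*(s-13/20)^6*(37/40-s)^2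
      + (51392870334208/133974300625)*(s-13/20)^7*(37/40-s)^1
      + (21846226881792/133974300625)*(s-13/20)^8 := by positivity
    push_cast at h
    linarith
  · have h := log_piece s (1) (2) hs (by norm_num) (by norm_num)
    have u : 0 ≤ s - 37/40 := sub_nonneg.2 (by linarith)
    have v : 0 ≤ 1 - s := sub_nonneg.2 (by linarith)
    have hb : 0 ≤ (7282075627264/1366875)*(1-s)^8
      + (4631512726784/91125)*(s-37/40)^1*(1-s)^7
      + (462251581184/2187)*(s-37/40)^2*(1-s)^6
      + (5380056548608/10935)*(s-37/40)^3*(1-s)^5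
      + (167506765312/243)*(s-37/40)^4*(1-s)^4
      + (1273095700480/2187)*(s-37/40)^5*(1-s)^3
      + (607728762880/2187)*(s-37/40)^6*(1-s)^2
      + (44981288960/729)*(s-37/40)^7*(1-s)^1
      + (6013583360/2187)*(s-37/40)^8 := by positivity
    push_cast at h
    linarith

/-! ### Sine polynomials -/

lemma cos_rec (x : ℝ) (j : ℝ) : Real.cos ((j+2)*x) = 2*Real.cos x*Real.cos ((j+1)*x) - Real.cos (j*x) := by
  rw [show (j+2)*x = (j+1)*x + x by ring, show j*x = (j+1)*x - x by ring, Real.cos_add, Real.cos_sub]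
  ring

lemma sin_rec (x : ℝ) (j : ℝ) : Real.sin ((j+2)*x) = 2*Real.cos x*Real.sin ((j+1)*x) - Real.sin (j*x) := by
  rw [show (j+2)*x = (j+1)*x + x by ring, show j*x = (j+1)*x - x by ring, Real.sin_add, Real.sin_sub]
  ring

lemma sin_tan (z ci si : ℝ) (hsi : 0 < si) (h : ci^2 + si^2 = 1) : Real.sin z ≤ (1 - Real.cos z * ci)/si := by
  rw [le_div_iff₀ hsi]
  nlinarith [Real.sin_sq_add_cos_sq z, sq_nonneg (Real.cos z - ci), sq_nonneg (Real.sin z - si)]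

lemma ang_le_pos (z : ℝ) (h1 : z ≤ Real.pi) (hc : 0 ≤ Real.cos z) : z ≤ Real.pi/2 - Real.cos z := by
  have hz : z ≤ Real.pi/2 := by
    by_contra h
    push Not at h
    have := Real.cos_neg_of_pi_div_two_lt_of_lt h (by linarith [Real.pi_pos])
    linarith
  have := Real.sin_le (x := Real.pi/2 - z) (by linarith)
  rw [Real.sin_pi_div_two_sub] at this
  linarith

lemma ang_le_neg (z : ℝ) (h0 : 0 ≤ z) (h1 : z ≤ Real.pi) (hc : Real.cos z ≤ 0) : z ≤ Real.pi/2 - Real.pi/2 * Real.cos z := by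
  rcases le_total z (Real.pi/2) with h | h
  · nlinarith [Real.pi_pos]
  · have := Real.mul_le_sin (x := z - Real.pi/2) (by linarith) (by linarith)
    rw [Real.sin_sub_pi_div_two] at this
    have hp := Real.pi_pos
    have e : 2 / Real.pi * (z - Real.pi/2) = (z - Real.pi/2) / (Real.pi/2) := by field_simp
    rw [e, div_le_iff₀ (by positivity)] at this
    linarith

/-- the polynomial `R1` with `S1 z = sin z * R1 (cos z)` -/
noncomputable def Rp1 (x : ℝ) : ℝ := (28019/35000) + (2767/10000)*x^1 + (639/3500)*x^2 + (69/625)*x^3 + (-419/4375)*x^4 + (-28/625)*x^5 + (1332/4375)*x^6 + (146/625)*x^7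

/-- sine polynomial -/
noncomputable def Sp1 (z : ℝ) : ℝ := (429/500)*Real.sin (1*z) + (369/2000)*Real.sin (2*z) + (141/2000)*Real.sin (3*z) + (27/800)*Real.sin (4*z) + (89/5000)*Real.sin (5*z) + (191/20000)*Real.sin (6*z) + (333/70000)*Real.sin (7*z) + (73/40000)*Real.sin (8*z)

lemma Sp1_eq (z : ℝ) : Sp1 z = Real.sin z * Rp1 (Real.cos z) := by
  have h1 : Real.sin (1*z) = Real.sin z := by rw [one_mul]
  have h0 : Real.sin (0*z) = 0 := by simp
  have h2 := sin_rec z 0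
  norm_num1 at h2
  have h3 := sin_rec z 1
  norm_num1 at h3
  have h4 := sin_rec z 2
  norm_num1 at h4
  have h5 := sin_rec z 3
  norm_num1 at h5
  have h6 := sin_rec z 4
  norm_num1 at h6
  have h7 := sin_rec z 5
  norm_num1 at h7
  have h8 := sin_rec z 6
  norm_num1 at h8
  unfold Sp1 Rp1
  rw [h8]
  rw [h7]
  rw [h6]
  rw [h5]
  rw [h4]
  rw [h3]
  rw [h2]
  simp only [one_mul, zero_mul, Real.sin_zero]
  ring

lemma Rp1_nonneg (x : ℝ) (hx0 : -1 ≤ x) (hx1 : x ≤ 1) : 0 ≤ Rp1 x := by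
  unfold Rp1
  · have u : 0 ≤ x - (-1) := sub_nonneg.2 (by linarith)
    have v : 0 ≤ 1 - x := sub_nonneg.2 (by linarith)
    have hb : 0 ≤ (6159/1280000)*(1-x)^7
      + (47319/1280000)*(x - (-1))^1*(1-x)^6
      + (26003/256000)*(x - (-1))^2*(1-x)^5
      + (2285097/8960000)*(x - (-1))^3*(1-x)^4
      + (1256419/8960000)*(x - (-1))^4*(1-x)^3
      + (270413/1280000)*(x - (-1))^5*(1-x)^2
      + (47181/1280000)*(x - (-1))^6*(1-x)^1
      + (17677/1280000)*(x - (-1))^7 := by positivity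
    linarith

lemma Rp1_pos (x sz : ℝ) (hx0 : 0 ≤ x) (hx1 : x ≤ 1) (hR : 0 ≤ Rp1 x)
    (ht : ∀ ci si : ℝ, 0 < si → ci^2 + si^2 = 1 → sz ≤ (1 - x * ci)/si) :
    sz * Rp1 x ≤ 1363411/1600000 + 31/400 * x := by
  rcases le_total x (47/100) with h0 | h0
  · have u : 0 ≤ x - 0 := sub_nonneg.2 (by linarith)
    have v : 0 ≤ 47/100 - x := sub_nonneg.2 (by linarith)
    have hb : 0 ≤ (3828943750000000/500037019896981)*(47/100-x)^8
      + (32878208750000000/500037019896981)*(x - 0)^1*(47/100-x)^7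
      + (39286209362500000/166679006632327)*(x - 0)^2*(47/100-x)^6
      + (229783910022500000/500037019896981)*(x - 0)^3*(47/100-x)^5
      + (37871947106960000/71433859985283)*(x - 0)^4*(47/100-x)^4
      + (61173916198544600/166679006632327)*(x - 0)^5*(47/100-x)^3
      + (10341090149901032/71433859985283)*(x - 0)^6*(47/100-x)^2
      + (15686229921476661/595282166544025)*(x - 0)^7*(47/100-x)^1
      + (25659173286026057/59528216654402500)*(x - 0)^8 := by positivity
    have h := mul_le_mul_of_nonneg_right (ht (7/25) (24/25) (by norm_num) (by norm_num)) hR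
    refine h.trans ?_
    unfold Rp1
    linarith
  · have u : 0 ≤ x - 47/100 := sub_nonneg.2 (by linarith)
    have v : 0 ≤ 1 - x := sub_nonneg.2 (by linarith)
    have hb : 0 ≤ (99702102978604359/77824613014201250)*(1-x)^8
      + (60660426075959726/1556492260284025)*(x - 47/100)^1*(1-x)^7
      + (14607897089270376/62259690411361)*(x - 47/100)^2*(1-x)^6
      + (283956560839543600/435817832879527)*(x - 47/100)^3*(1-x)^5
      + (436703436207560000/435817832879527)*(x - 47/100)^4*(1-x)^4
      + (387800188309000000/435817832879527)*(x - 47/100)^5*(1-x)^3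
      + (27240019625000000/62259690411361)*(x - 47/100)^6*(1-x)^2
      + (6369127500000000/62259690411361)*(x - 47/100)^7*(1-x)^1
      + (457818750000000/62259690411361)*(x - 47/100)^8 := by positivity
    have h := mul_le_mul_of_nonneg_right (ht (3/5) (4/5) (by norm_num) (by norm_num)) hR
    refine h.trans ?_
    unfold Rp1
    linarith

lemma Rp1_neg (x sz : ℝ) (hx0 : -1 ≤ x) (hx1 : x ≤ 0) (hR : 0 ≤ Rp1 x)
    (ht : ∀ ci si : ℝ, 0 < si → ci^2 + si^2 = 1 → sz ≤ (1 - x * ci)/si) :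
    sz * Rp1 x ≤ 1363411/1600000 + 194773/1600000 * x := by
  · have u : 0 ≤ x - (-1) := sub_nonneg.2 (by linarith)
    have v : 0 ≤ 0 - x := sub_nonneg.2 (by linarith)
    have hb : 0 ≤ (91599/800000)*(0-x)^8
      + (1323877/1600000)*(x - (-1))^1*(0-x)^7
      + (1023999/320000)*(x - (-1))^2*(0-x)^6
      + (68361247/11200000)*(x - (-1))^3*(0-x)^5
      + (2222167/320000)*(x - (-1))^4*(0-x)^4
      + (57772521/11200000)*(x - (-1))^5*(0-x)^3
      + (26282919/11200000)*(x - (-1))^6*(0-x)^2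
      + (1271601/2240000)*(x - (-1))^7*(0-x)^1
      + (577797/11200000)*(x - (-1))^8 := by positivity
    have h := mul_le_mul_of_nonneg_right (ht (0) (1) (by norm_num) (by norm_num)) hR
    refine h.trans ?_
    unfold Rp1
    linarith

lemma Sp1_nonneg (z : ℝ) (h0 : 0 ≤ z) (h1 : z ≤ Real.pi) : 0 ≤ Sp1 z := by
  rw [Sp1_eq]
  exact mul_nonneg (Real.sin_nonneg_of_nonneg_of_le_pi h0 h1) (Rp1_nonneg _ (Real.neg_one_le_cos z) (Real.cos_le_one z))

lemma Sp1_le (z : ℝ) (h0 : 0 ≤ z) (h1 : z ≤ Real.pi) : Sp1 z ≤ 31/400 * (4*Real.pi - z) := by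
  rw [Sp1_eq]
  have hR := Rp1_nonneg _ (Real.neg_one_le_cos z) (Real.cos_le_one z)
  have hp := Real.pi_gt_d4
  rcases le_total 0 (Real.cos z) with h | h
  · have := Rp1_pos _ _ h (Real.cos_le_one z) hR (fun ci si => sin_tan z ci si)
    have := ang_le_pos z h1 h
    linarith
  · have := Rp1_neg _ _ (Real.neg_one_le_cos z) h hR (fun ci si => sin_tan z ci si)
    have := ang_le_neg z h0 h1 h
    nlinarith [Real.neg_one_le_cos z]

lemma Sp1_main (u : ℝ) (hu : 2 * Real.pi ≤ u) : -Sp1 u ≤ 31/400 * u := by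
  have hp := Real.pi_pos
  have hu0 : 0 ≤ u := le_trans (by positivity) hu
  set m : ℤ := ⌊u / (2*Real.pi)⌋ with hm
  have hm1 : (m:ℝ) * (2*Real.pi) ≤ u := by
    rw [← le_div_iff₀ (by positivity)]; exact Int.floor_le _
  have hm2 : u < (m+1) * (2*Real.pi) := by
    rw [← div_lt_iff₀ (by positivity)]; exact Int.lt_floor_add_one _
  have hmM : (1:ℤ) ≤ m := by
    rw [hm, Int.le_floor, le_div_iff₀ (by positivity)]; push_cast; linarith
  have hmM' : (1:ℝ) ≤ m := by exact_mod_cast hmM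
  rcases le_total (u - m*(2*Real.pi)) Real.pi with h | h
  · have := Sp1_nonneg (u - m*(2*Real.pi)) (by linarith) h
    have e : Sp1 (u - m*(2*Real.pi)) = Sp1 u := by
      unfold Sp1
      rw [show (1:ℝ) * (u - m*(2*Real.pi)) = 1*u - ((1*m : ℤ) : ℝ)*(2*Real.pi) by push_cast; ring, Real.sin_sub_int_mul_two_pi]
      rw [show (2:ℝ) * (u - m*(2*Real.pi)) = 2*u - ((2*m : ℤ) : ℝ)*(2*Real.pi) by push_cast; ring, Real.sin_sub_int_mul_two_pi]
      rw [show (3:ℝ) * (u - m*(2*Real.pi)) = 3*u - ((3*m : ℤ) : ℝ)*(2*Real.pi) by push_cast; ring, Real.sin_sub_int_mul_two_pi]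
      rw [show (4:ℝ) * (u - m*(2*Real.pi)) = 4*u - ((4*m : ℤ) : ℝ)*(2*Real.pi) by push_cast; ring, Real.sin_sub_int_mul_two_pi]
      rw [show (5:ℝ) * (u - m*(2*Real.pi)) = 5*u - ((5*m : ℤ) : ℝ)*(2*Real.pi) by push_cast; ring, Real.sin_sub_int_mul_two_pi]
      rw [show (6:ℝ) * (u - m*(2*Real.pi)) = 6*u - ((6*m : ℤ) : ℝ)*(2*Real.pi) by push_cast; ring, Real.sin_sub_int_mul_two_pi]
      rw [show (7:ℝ) * (u - m*(2*Real.pi)) = 7*u - ((7*m : ℤ) : ℝ)*(2*Real.pi) by push_cast; ring, Real.sin_sub_int_mul_two_pi]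
      rw [show (8:ℝ) * (u - m*(2*Real.pi)) = 8*u - ((8*m : ℤ) : ℝ)*(2*Real.pi) by push_cast; ring, Real.sin_sub_int_mul_two_pi]
    rw [e] at this
    nlinarith
  · have := Sp1_le ((m+1)*(2*Real.pi) - u) (by linarith) (by linarith)
    have e : Sp1 ((m+1)*(2*Real.pi) - u) = - Sp1 u := by
      unfold Sp1
      rw [show (1:ℝ) * ((m+1)*(2*Real.pi) - u) = ((1*(m+1) : ℤ) : ℝ)*(2*Real.pi) - 1*u by push_cast; ring, Real.sin_int_mul_two_pi_sub]
      rw [show (2:ℝ) * ((m+1)*(2*Real.pi) - u) = ((2*(m+1) : ℤ) : ℝ)*(2*Real.pi) - 2*u by push_cast; ring, Real.sin_int_mul_two_pi_sub]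
      rw [show (3:ℝ) * ((m+1)*(2*Real.pi) - u) = ((3*(m+1) : ℤ) : ℝ)*(2*Real.pi) - 3*u by push_cast; ring, Real.sin_int_mul_two_pi_sub]
      rw [show (4:ℝ) * ((m+1)*(2*Real.pi) - u) = ((4*(m+1) : ℤ) : ℝ)*(2*Real.pi) - 4*u by push_cast; ring, Real.sin_int_mul_two_pi_sub]
      rw [show (5:ℝ) * ((m+1)*(2*Real.pi) - u) = ((5*(m+1) : ℤ) : ℝ)*(2*Real.pi) - 5*u by push_cast; ring, Real.sin_int_mul_two_pi_sub]
      rw [show (6:ℝ) * ((m+1)*(2*Real.pi) - u) = ((6*(m+1) : ℤ) : ℝ)*(2*Real.pi) - 6*u by push_cast; ring, Real.sin_int_mul_two_pi_sub]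
      rw [show (7:ℝ) * ((m+1)*(2*Real.pi) - u) = ((7*(m+1) : ℤ) : ℝ)*(2*Real.pi) - 7*u by push_cast; ring, Real.sin_int_mul_two_pi_sub]
      rw [show (8:ℝ) * ((m+1)*(2*Real.pi) - u) = ((8*(m+1) : ℤ) : ℝ)*(2*Real.pi) - 8*u by push_cast; ring, Real.sin_int_mul_two_pi_sub]
      ring
    rw [e] at this
    nlinarith

/-- the polynomial `R2` with `S2 z = sin z * R2 (cos z)` -/
noncomputable def Rp2 (x : ℝ) : ℝ := (3499/10000) + (301/2500)*x^1 + (191/2500)*x^2 + (73/2500)*x^3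

/-- sine polynomial -/
noncomputable def Sp2 (z : ℝ) : ℝ := (369/1000)*Real.sin (1*z) + (27/400)*Real.sin (2*z) + (191/10000)*Real.sin (3*z) + (73/20000)*Real.sin (4*z)

lemma Sp2_eq (z : ℝ) : Sp2 z = Real.sin z * Rp2 (Real.cos z) := by
  have h1 : Real.sin (1*z) = Real.sin z := by rw [one_mul]
  have h0 : Real.sin (0*z) = 0 := by simp
  have h2 := sin_rec z 0
  norm_num1 at h2
  have h3 := sin_rec z 1
  norm_num1 at h3
  have h4 := sin_rec z 2
  norm_num1 at h4
  unfold Sp2 Rp2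
  rw [h4]
  rw [h3]
  rw [h2]
  simp only [one_mul, zero_mul, Real.sin_zero]
  ring

lemma Rp2_nonneg (x : ℝ) (hx0 : -1 ≤ x) (hx1 : x ≤ 1) : 0 ≤ Rp2 x := by
  unfold Rp2
  · have u : 0 ≤ x - (-1) := sub_nonneg.2 (by linarith)
    have v : 0 ≤ 1 - x := sub_nonneg.2 (by linarith)
    have hb : 0 ≤ (2767/80000)*(1-x)^3
      + (1881/16000)*(x - (-1))^1*(1-x)^2
      + (10061/80000)*(x - (-1))^2*(1-x)^1
      + (5759/80000)*(x - (-1))^3 := by positivity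
    linarith

lemma Rp2_pos (x sz : ℝ) (hx0 : 0 ≤ x) (hx1 : x ≤ 1) (hR : 0 ≤ Rp2 x)
    (ht : ∀ ci si : ℝ, 0 < si → ci^2 + si^2 = 1 → sz ≤ (1 - x * ci)/si) :
    sz * Rp2 x ≤ 2883897/8000000 + 153/2000 * x := by
  rcases le_total x (61/100) with h0 | h0
  · have u : 0 ≤ x - 0 := sub_nonneg.2 (by linarith)
    have v : 0 ≤ 61/100 - x := sub_nonneg.2 (by linarith)
    have hb : 0 ≤ (367925/27691682)*(61/100-x)^4
      + (5353435/27691682)*(x - 0)^1*(61/100-x)^3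
      + (50204813/138458410)*(x - 0)^2*(61/100-x)^2
      + (1228743153/6922920500)*(x - 0)^3*(61/100-x)^1
      + (2072718137/1384584100000)*(x - 0)^4 := by positivity
    have h := mul_le_mul_of_nonneg_right (ht (9/41) (40/41) (by norm_num) (by norm_num)) hR
    refine h.trans ?_
    unfold Rp2
    linarith
  · have u : 0 ≤ x - 61/100 := sub_nonneg.2 (by linarith)
    have v : 0 ≤ 1 - x := sub_nonneg.2 (by linarith)
    have hb : 0 ≤ (16237133113/13880646000)*(1-x)^4
      + (1994345923/347016150)*(x - 61/100)^1*(1-x)^3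
      + (23572660/2313441)*(x - 61/100)^2*(1-x)^2
      + (54781325/6940323)*(x - 61/100)^3*(1-x)^1
      + (31832275/13880646)*(x - 61/100)^4 := by positivity
    have h := mul_le_mul_of_nonneg_right (ht (5/13) (12/13) (by norm_num) (by norm_num)) hR
    refine h.trans ?_
    unfold Rp2
    linarith

lemma Rp2_neg (x sz : ℝ) (hx0 : -1 ≤ x) (hx1 : x ≤ 0) (hR : 0 ≤ Rp2 x)
    (ht : ∀ ci si : ℝ, 0 < si → ci^2 + si^2 = 1 → sz ≤ (1 - x * ci)/si) :
    sz * Rp2 x ≤ 2883897/8000000 + 961299/8000000 * x := by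
  rcases le_total x (-7/50) with h0 | h0
  · have u : 0 ≤ x - (-1) := sub_nonneg.2 (by linarith)
    have v : 0 ≤ -7/50 - x := sub_nonneg.2 (by linarith)
    have hb : 0 ≤ (16757425/164102448)*(-7/50-x)^4
      + (78389257/218803264)*(x - (-1))^1*(-7/50-x)^3
      + (289538969/656409792)*(x - (-1))^2*(-7/50-x)^2
      + (3259926761/16410244800)*(x - (-1))^3*(-7/50-x)^1
      + (42077221/27350408000)*(x - (-1))^4 := by positivity
    have h := mul_le_mul_of_nonneg_right (ht (-5/13) (12/13) (by norm_num) (by norm_num)) hR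
    refine h.trans ?_
    unfold Rp2
    linarith
  · have u : 0 ≤ x - (-7/50) := sub_nonneg.2 (by linarith)
    have v : 0 ≤ 0 - x := sub_nonneg.2 (by linarith)
    have hb : 0 ≤ (92030773/3841600)*(0-x)^4
      + (395335473/3841600)*(x - (-7/50))^1*(0-x)^3
      + (24850045/153664)*(x - (-7/50))^2*(0-x)^2
      + (16952707/153664)*(x - (-7/50))^3*(0-x)^1
      + (2117425/76832)*(x - (-7/50))^4 := by positivity
    have h := mul_le_mul_of_nonneg_right (ht (0) (1) (by norm_num) (by norm_num)) hR
    refine h.trans ?_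
    unfold Rp2
    linarith

lemma Sp2_nonneg (z : ℝ) (h0 : 0 ≤ z) (h1 : z ≤ Real.pi) : 0 ≤ Sp2 z := by
  rw [Sp2_eq]
  exact mul_nonneg (Real.sin_nonneg_of_nonneg_of_le_pi h0 h1) (Rp2_nonneg _ (Real.neg_one_le_cos z) (Real.cos_le_one z))

lemma Sp2_le (z : ℝ) (h0 : 0 ≤ z) (h1 : z ≤ Real.pi) : Sp2 z ≤ 153/2000 * (2*Real.pi - z) := by
  rw [Sp2_eq]
  have hR := Rp2_nonneg _ (Real.neg_one_le_cos z) (Real.cos_le_one z)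
  have hp := Real.pi_gt_d4
  rcases le_total 0 (Real.cos z) with h | h
  · have := Rp2_pos _ _ h (Real.cos_le_one z) hR (fun ci si => sin_tan z ci si)
    have := ang_le_pos z h1 h
    linarith
  · have := Rp2_neg _ _ (Real.neg_one_le_cos z) h hR (fun ci si => sin_tan z ci si)
    have := ang_le_neg z h0 h1 h
    nlinarith [Real.neg_one_le_cos z]

lemma Sp2_main (u : ℝ) (hu : 0 * Real.pi ≤ u) : -Sp2 u ≤ 153/2000 * u := by
  have hp := Real.pi_pos
  have hu0 : 0 ≤ u := le_trans (by positivity) hu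
  set m : ℤ := ⌊u / (2*Real.pi)⌋ with hm
  have hm1 : (m:ℝ) * (2*Real.pi) ≤ u := by
    rw [← le_div_iff₀ (by positivity)]; exact Int.floor_le _
  have hm2 : u < (m+1) * (2*Real.pi) := by
    rw [← div_lt_iff₀ (by positivity)]; exact Int.lt_floor_add_one _
  have hmM : (0:ℤ) ≤ m := by
    rw [hm, Int.le_floor, le_div_iff₀ (by positivity)]; push_cast; linarith
  have hmM' : (0:ℝ) ≤ m := by exact_mod_cast hmM
  rcases le_total (u - m*(2*Real.pi)) Real.pi with h | h
  · have := Sp2_nonneg (u - m*(2*Real.pi)) (by linarith) h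
    have e : Sp2 (u - m*(2*Real.pi)) = Sp2 u := by
      unfold Sp2
      rw [show (1:ℝ) * (u - m*(2*Real.pi)) = 1*u - ((1*m : ℤ) : ℝ)*(2*Real.pi) by push_cast; ring, Real.sin_sub_int_mul_two_pi]
      rw [show (2:ℝ) * (u - m*(2*Real.pi)) = 2*u - ((2*m : ℤ) : ℝ)*(2*Real.pi) by push_cast; ring, Real.sin_sub_int_mul_two_pi]
      rw [show (3:ℝ) * (u - m*(2*Real.pi)) = 3*u - ((3*m : ℤ) : ℝ)*(2*Real.pi) by push_cast; ring, Real.sin_sub_int_mul_two_pi]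
      rw [show (4:ℝ) * (u - m*(2*Real.pi)) = 4*u - ((4*m : ℤ) : ℝ)*(2*Real.pi) by push_cast; ring, Real.sin_sub_int_mul_two_pi]
    rw [e] at this
    nlinarith
  · have := Sp2_le ((m+1)*(2*Real.pi) - u) (by linarith) (by linarith)
    have e : Sp2 ((m+1)*(2*Real.pi) - u) = - Sp2 u := by
      unfold Sp2
      rw [show (1:ℝ) * ((m+1)*(2*Real.pi) - u) = ((1*(m+1) : ℤ) : ℝ)*(2*Real.pi) - 1*u by push_cast; ring, Real.sin_int_mul_two_pi_sub]
      rw [show (2:ℝ) * ((m+1)*(2*Real.pi) - u) = ((2*(m+1) : ℤ) : ℝ)*(2*Real.pi) - 2*u by push_cast; ring, Real.sin_int_mul_two_pi_sub]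
      rw [show (3:ℝ) * ((m+1)*(2*Real.pi) - u) = ((3*(m+1) : ℤ) : ℝ)*(2*Real.pi) - 3*u by push_cast; ring, Real.sin_int_mul_two_pi_sub]
      rw [show (4:ℝ) * ((m+1)*(2*Real.pi) - u) = ((4*(m+1) : ℤ) : ℝ)*(2*Real.pi) - 4*u by push_cast; ring, Real.sin_int_mul_two_pi_sub]
      ring
    rw [e] at this
    nlinarith

/-! ### Bound away from the main peak -/

lemma two_sin_le_exp (x : ℝ) : |2 * Real.sin (x/2)| ≤ Real.exp (0.08 - (0.858 * Real.cos x + 0.369 * Real.cos (2*x)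
    + 0.2115 * Real.cos (3*x) + 0.135 * Real.cos (4*x) + 0.089 * Real.cos (5*x) + 0.0573 * Real.cos (6*x)
    + 0.0333 * Real.cos (7*x) + 0.0146 * Real.cos (8*x))) := by
  rcases eq_or_ne (Real.sin (x/2)) 0 with h | h
  · rw [h]; simp [Real.exp_nonneg]
  set s := Real.sin (x/2)^2 with hs
  have hs0 : 0 < s := by positivity
  have hs1 : s ≤ 1 := Real.sin_sq_le_one _
  have hc : Real.cos x = 1 - 2*s := by
    have := Real.cos_two_mul (x/2)
    rw [show 2*(x/2) = x by ring] at this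
    rw [this, hs, Real.cos_sq']; ring
  have hm := maj_poly s hs0 hs1
  have e : |2 * Real.sin (x/2)| = Real.exp (Real.log (4*s)/2) := by
    have h4 : 4 * s = |2 * Real.sin (x/2)|^2 := by rw [sq_abs, hs]; ring
    rw [h4, Real.log_pow]
    rw [show ((2:ℕ):ℝ) * Real.log |2 * Real.sin (x/2)| / 2 = Real.log |2 * Real.sin (x/2)| by push_cast; ring]
    rw [Real.exp_log (abs_pos.2 (by positivity))]
  rw [e, Real.exp_le_exp]
  refine hm.trans (le_of_eq ?_)
  have h2 := cos_rec x 0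
  have h3 := cos_rec x 1
  have h4 := cos_rec x 2
  have h5 := cos_rec x 3
  have h6 := cos_rec x 4
  have h7 := cos_rec x 5
  have h8 := cos_rec x 6
  norm_num1 at h2 h3 h4 h5 h6 h7 h8
  rw [h8, h7, h6, h5, h4, h3, h2]
  simp only [one_mul, zero_mul, Real.cos_zero]
  rw [hc]
  ring

/-- minus the cosine sum -/
noncomputable def Csum (n : ℕ) (t : ℝ) : ℝ := - ∑ k ∈ Finset.Icc 1 n, Real.cos (k * t)

lemma Csum_succ (n : ℕ) (t : ℝ) : Csum (n+1) t = Csum n t - Real.cos ((n+1 : ℕ) * t) := by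
  unfold Csum
  rw [Finset.sum_Icc_succ_top (by omega)]
  ring

lemma FF_le_exp (n : ℕ) (θ : ℝ) : |FF n θ| ≤ Real.exp (0.08 * n + (0.858 * Csum n (1*θ) + 0.369 * Csum n (2*θ)
    + 0.2115 * Csum n (3*θ) + 0.135 * Csum n (4*θ) + 0.089 * Csum n (5*θ) + 0.0573 * Csum n (6*θ)
    + 0.0333 * Csum n (7*θ) + 0.0146 * Csum n (8*θ))) := by
  induction n with
  | zero => simp [FF, Csum]
  | succ n ih =>
    rw [FF_succ, abs_mul]
    have h := two_sin_le_exp ((n+1 : ℕ) * θ)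
    calc _ ≤ _ := mul_le_mul ih h (abs_nonneg _) (Real.exp_nonneg _)
      _ = _ := by
        rw [← Real.exp_add]
        congr 1
        simp only [Csum_succ]
        rw [show ((n+1 : ℕ) : ℝ) * (1*θ) = (n+1 : ℕ) * θ by ring]
        simp only [mul_left_comm (((n+1 : ℕ) : ℝ)) _ θ]
        push_cast
        ring

lemma Csum_mul (n : ℕ) (t : ℝ) : Csum n t * (2 * Real.sin (t/2)) = Real.sin (t/2) - Real.sin ((n + 1/2) * t) := by
  induction n with
  | zero => simp [Csum]; rw [show 2⁻¹ * t = t/2 by ring]; simp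
  | succ n ih =>
    rw [Csum_succ, sub_mul, ih]
    have h1 := Real.sin_add ((n+1 : ℕ) * t) (t/2)
    have h2 := Real.sin_sub ((n+1 : ℕ) * t) (t/2)
    rw [show ((n+1 : ℕ) : ℝ) * t + t/2 = (((n+1 : ℕ) : ℝ) + 1/2) * t by ring] at h1
    rw [show ((n+1 : ℕ) : ℝ) * t - t/2 = (n + 1/2) * t by push_cast; ring] at h2
    linarith

lemma Csum_far (n : ℕ) (t δ : ℝ) (hδ : 0 < δ) (h : δ ≤ |Real.sin (t/2)|) : Csum n t ≤ 1/2 + 1/(2*δ) := by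
  have h0 : 0 < |Real.sin (t/2)| := lt_of_lt_of_le hδ h
  have hm := Csum_mul n t
  set x := Real.sin (t/2)
  set y := Real.sin ((n + 1/2) * t)
  have hy : |y| ≤ 1 := Real.abs_sin_le_one _
  have hx : x ≠ 0 := abs_pos.1 h0
  have e : Csum n t = 1/2 + (-y/(2*x)) := by field_simp; linarith
  rw [e]
  have : -y/(2*x) ≤ 1/(2*δ) := by
    calc -y/(2*x) ≤ |-y/(2*x)| := le_abs_self _
      _ = |y|/(2*|x|) := by rw [abs_div, abs_neg, abs_mul, abs_two]
      _ ≤ 1/(2*δ) := by gcongr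
  linarith

lemma Csum_near (n : ℕ) (t : ℝ) (h0 : 0 < t) (h1 : t ≤ 2.6) : Csum n t ≤ 0.66 - Real.sin ((n + 1/2) * t) / t := by
  have hs := sin_ge_cubic (t/2) (by linarith)
  have hpos : 0 < t/2 - (t/2)^3/6 := by nlinarith [mul_pos h0 h0]
  have hm := Csum_mul n t
  set x := Real.sin (t/2)
  set y := Real.sin ((n + 1/2) * t)
  have hx : 0 < x := by linarith
  have hy : -1 ≤ y := Real.neg_one_le_sin _
  have hy' : y ≤ 1 := Real.sin_le_one _
  have hxt : x ≤ t/2 := Real.sin_le (by linarith)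
  have e : Csum n t = 1/2 - y/(2*x) := by field_simp; linarith
  rw [e]
  have hk : 1/(2*x) ≤ 1/t + 0.16 := by
    rw [div_add' _ _ _ h0.ne', div_le_div_iff₀ (by positivity) h0]
    have : t * (t/2)^2/6 ≤ 0.16 * t * (t - t * (t/2)^2/6) := by nlinarith [mul_pos h0 h0]
    have : 0.16 * t * (t - t * (t/2)^2/6) ≤ 0.16 * t * (2*x) := by gcongr; nlinarith
    nlinarith
  have hk2 : 1/t ≤ 1/(2*x) := by apply one_div_le_one_div_of_le (by positivity); linarith
  have e2 : y/(2*x) = y * (1/(2*x)) := by ring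
  have e3 : y/t = y * (1/t) := by ring
  rw [e2, e3]
  nlinarith

lemma Csum_per (n : ℕ) (t : ℝ) (m : ℤ) : Csum n (t - m * (2*Real.pi)) = Csum n t := by
  unfold Csum
  congr 1
  apply Finset.sum_congr rfl
  intro k _
  rw [show (k:ℝ) * (t - m * (2*Real.pi)) = k*t - ((k*m : ℤ) : ℝ) * (2*Real.pi) by push_cast; ring, Real.cos_sub_int_mul_two_pi]

lemma Csum_neg (n : ℕ) (t : ℝ) : Csum n (-t) = Csum n t := by
  unfold Csum
  congr 1
  apply Finset.sum_congr rfl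
  intro k _
  rw [show (k:ℝ) * (-t) = -(k*t) by ring, Real.cos_neg]

lemma Csum_zero (n : ℕ) : Csum n 0 = -n := by simp [Csum]

lemma neg_sin_le (u : ℝ) (hu : 0 ≤ u) : - Real.sin u ≤ 0.2417 * u := by
  have hp := Real.pi_gt_d4
  have hp2 := Real.pi_lt_d4
  rcases le_total u Real.pi with h | h
  · have := Real.sin_nonneg_of_nonneg_of_le_pi hu h
    linarith
  rcases le_total u 4.14 with h2 | h2
  · have := Real.sin_le (x := u - Real.pi) (by linarith)
    rw [Real.sin_sub_pi] at this
    linarith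
  · have := Real.neg_one_le_sin u
    linarith

lemma Csum_bad (n : ℕ) (t : ℝ) (h : |Real.sin (t/2)| < 0.08) : Csum n t ≤ 0.66 + 0.2417 * (n + 1/2) := by
  have hp := Real.pi_pos
  have hp3 := Real.pi_lt_d4
  set m : ℤ := round (t / (2*Real.pi)) with hm
  have hr := abs_sub_round (t / (2*Real.pi))
  rw [← hm] at hr
  set t' := t - m * (2*Real.pi) with ht'
  have e : t / (2*Real.pi) - m = t' / (2*Real.pi) := by rw [ht']; field_simp
  rw [e, abs_div, abs_of_pos (show 0 < 2*Real.pi by positivity), div_le_iff₀ (by positivity)] at hr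
  have hC : Csum n t = Csum n |t'| := by
    rw [← Csum_per n t m, ← ht']
    rcases abs_choice t' with h | h
    · rw [h]
    · rw [h, Csum_neg]
  rw [hC]
  have hsin : |Real.sin (|t'|/2)| = |Real.sin (t/2)| := by
    have e1 : |Real.sin (|t'|/2)| = |Real.sin (t'/2)| := by
      rcases abs_choice t' with h | h
      · rw [h]
      · rw [h, show -t'/2 = -(t'/2) by ring, Real.sin_neg, abs_neg]
    rw [e1, ht', show (t - m * (2*Real.pi))/2 = t/2 - m * Real.pi by ring]
    rw [← sq_eq_sq₀ (abs_nonneg _) (abs_nonneg _), sq_abs, sq_abs, Real.sin_sq_eq_half_sub, Real.sin_sq_eq_half_sub]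
    rw [show 2 * (t/2 - m * Real.pi) = 2 * (t/2) - m * (2*Real.pi) by ring, Real.cos_sub_int_mul_two_pi]
  rcases eq_or_lt_of_le (abs_nonneg t') with h0 | h0
  · rw [← h0, Csum_zero]
    have : (0:ℝ) ≤ n := Nat.cast_nonneg n
    linarith
  have hsm := Real.mul_le_sin (x := |t'|/2) (by linarith) (by linarith)
  rw [← hsin] at h
  have h8 := (le_abs_self _).trans_lt h
  have hle : |t'| ≤ 2.6 := by
    have h9 : 2 / Real.pi * (|t'|/2) ≤ 0.08 := hsm.trans h8.le
    rw [div_mul_eq_mul_div, div_le_iff₀ hp] at h9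
    linarith
  have h1 := Csum_near n |t'| h0 hle
  have h2 := neg_sin_le ((n + 1/2) * |t'|) (by positivity)
  have h3 : - Real.sin ((n + 1/2) * |t'|) / |t'| ≤ 0.2417 * (n + 1/2) := by
    rw [div_le_iff₀ h0]; linarith
  rw [neg_div] at h3
  linarith

lemma sin_small (x : ℝ) (h0 : 0 ≤ x) (h1 : x ≤ Real.pi/2) (h : Real.sin x < 0.16) : x ≤ 0.1625 := by
  by_contra hx
  push Not at hx
  have h2 := sin_ge_cubic 0.1625 (by norm_num)
  have h3 := Real.sin_le_sin_of_le_of_le_pi_div_two (x := 0.1625) (y := x) (by linarith [Real.pi_pos]) h1 hx.le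
  norm_num at h2
  linarith

lemma region1 (n : ℕ) (hn : 600 ≤ n) (θ : ℝ) (h0 : 2*Real.pi/n ≤ θ) (h1 : θ ≤ 0.325) :
    |FF n θ| ≤ Real.exp (0.1605 * n) := by
  refine (FF_le_exp n θ).trans (Real.exp_le_exp.2 ?_)
  have hn' : (600:ℝ) ≤ n := by exact_mod_cast hn
  have hp := Real.pi_pos
  have hθ : 0 < θ := lt_of_lt_of_le (by positivity) h0
  have c : ∀ j : ℝ, 1 ≤ j → j ≤ 8 → Csum n (j*θ) ≤ 0.66 - (1/j) * Real.sin (j * ((n+1/2)*θ)) / θ := by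
    intro j hj hj8
    have := Csum_near n (j*θ) (by positivity) (by nlinarith)
    rw [show (n+1/2) * (j*θ) = j * ((n+1/2)*θ) by ring] at this
    refine this.trans (le_of_eq ?_)
    field_simp
  have hu : (2:ℝ) * Real.pi ≤ (n+1/2)*θ := by
    rw [div_le_iff₀ (by linarith)] at h0
    nlinarith
  have hS := Sp1_main ((n+1/2)*θ) (by simpa using hu)
  have hS2 : - Sp1 ((n+1/2)*θ) / θ ≤ 0.0775 * (n+1/2) := by
    rw [div_le_iff₀ hθ]; linarith
  have c1 := c 1 (by norm_num) (by norm_num)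
  have c2 := c 2 (by norm_num) (by norm_num)
  have c3 := c 3 (by norm_num) (by norm_num)
  have c4 := c 4 (by norm_num) (by norm_num)
  have c5 := c 5 (by norm_num) (by norm_num)
  have c6 := c 6 (by norm_num) (by norm_num)
  have c7 := c 7 (by norm_num) (by norm_num)
  have c8 := c 8 (by norm_num) (by norm_num)
  unfold Sp1 at hS2
  simp only [neg_add, add_div, neg_div, mul_div_assoc, ← neg_mul] at hS2 c1 c2 c3 c4 c5 c6 c7 c8
  linarith

lemma region2 (n : ℕ) (hn : 600 ≤ n) (θ φ : ℝ) (hφ : θ = Real.pi - φ) (h0 : 0 ≤ φ) (h1 : φ ≤ 0.1625) :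
    |FF n θ| ≤ Real.exp (0.1605 * n) := by
  refine (FF_le_exp n θ).trans (Real.exp_le_exp.2 ?_)
  have hn' : (600:ℝ) ≤ n := by exact_mod_cast hn
  have hodd : ∀ j : ℕ, Odd j → j ≤ 7 → Csum n (j*θ) ≤ 1.11 := by
    intro j hj hj7
    have hj7' : (j:ℝ) ≤ 7 := by exact_mod_cast hj7
    have h2 : (0.82:ℝ) ≤ |Real.sin (j*θ/2)| := by
      rw [← abs_of_pos (show (0:ℝ) < 0.82 by norm_num), ← sq_le_sq, Real.sin_sq_eq_half_sub]
      rw [show 2*((j:ℝ)*θ/2) = j * Real.pi - j * φ by rw [hφ]; ring, Real.cos_nat_mul_pi_sub, hj.neg_one_pow]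
      have := Real.one_sub_sq_div_two_le_cos (x := j * φ)
      have hb : (j:ℝ) * φ ≤ 1.1375 := by nlinarith
      have hb0 : 0 ≤ (j:ℝ) * φ := by positivity
      nlinarith
    have := Csum_far n (j*θ) 0.82 (by norm_num) h2
    refine this.trans (by norm_num)
  have o1 := hodd 1 (by decide) (by norm_num)
  have o3 := hodd 3 (by decide) (by norm_num)
  have o5 := hodd 5 (by decide) (by norm_num)
  have o7 := hodd 7 (by decide) (by norm_num)
  push_cast at o1 o3 o5 o7
  have hev : ∀ i : ℕ, Csum n (2*i*θ) = Csum n (i * (2*φ)) := by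
    intro i
    rw [← Csum_neg, ← Csum_per n (-(2*i*θ)) (-i), hφ]
    congr 1
    push_cast; ring
  have e1 := hev 1
  have e2 := hev 2
  have e3 := hev 3
  have e4 := hev 4
  norm_num1 at e1 e2 e3 e4
  rw [e2, e3, e4]
  rw [one_mul] at e1
  rw [e1]
  rcases eq_or_lt_of_le h0 with h | hpos
  · rw [← h]
    simp only [mul_zero, Csum_zero]
    linarith
  have c : ∀ j : ℝ, 1 ≤ j → j ≤ 4 → Csum n (j*(2*φ)) ≤ 0.66 - (1/j) * Real.sin (j * ((n+1/2)*(2*φ))) / (2*φ) := by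
    intro j hj hj8
    have := Csum_near n (j*(2*φ)) (by positivity) (by nlinarith)
    rw [show (n+1/2) * (j*(2*φ)) = j * ((n+1/2)*(2*φ)) by ring] at this
    refine this.trans (le_of_eq ?_)
    field_simp
  have hS := Sp2_main ((n+1/2)*(2*φ)) (by simp; positivity)
  have hS2 : - Sp2 ((n+1/2)*(2*φ)) / (2*φ) ≤ 0.0765 * (n+1/2) := by
    rw [div_le_iff₀ (by positivity)]; linarith
  have c1 := c 1 (by norm_num) (by norm_num)
  have c2 := c 2 (by norm_num) (by norm_num)
  have c3 := c 3 (by norm_num) (by norm_num)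
  have c4 := c 4 (by norm_num) (by norm_num)
  rw [one_mul] at c1
  unfold Sp2 at hS2
  simp only [neg_add, add_div, neg_div, mul_div_assoc, ← neg_mul] at hS2 c1 c2 c3 c4
  linarith

lemma region3 (n : ℕ) (hn : 600 ≤ n) (θ : ℝ) (h1 : 0.16 ≤ |Real.sin (θ/2)|) (h2 : 0.16 ≤ |Real.sin θ|) :
    |FF n θ| ≤ Real.exp (0.1605 * n) := by
  refine (FF_le_exp n θ).trans (Real.exp_le_exp.2 ?_)
  have hn' : (600:ℝ) ≤ n := by exact_mod_cast hn
  set B := 0.66 + 0.2417 * ((n:ℝ) + 1/2) with hB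
  have hBG : (6.75:ℝ) ≤ B := by rw [hB]; linarith
  have c1 := Csum_far n (1*θ) 0.16 (by norm_num) (by rw [one_mul]; exact h1)
  have c2 := Csum_far n (2*θ) 0.16 (by norm_num) (by rw [show 2*θ/2 = θ by ring]; exact h2)
  have dich : ∀ t, Csum n t ≤ B ∧ (Csum n t ≤ 6.75 ∨ |Real.sin (t/2)| < 0.08) := by
    intro t
    rcases lt_or_ge (|Real.sin (t/2)|) 0.08 with h | h
    · exact ⟨Csum_bad n t h, Or.inr h⟩
    · have := Csum_far n t 0.08 (by norm_num) h
      norm_num at this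
      exact ⟨by linarith, Or.inl (by linarith)⟩
  have diff : ∀ x y : ℝ, |Real.sin x| < 0.08 → |Real.sin y| < 0.08 → |Real.sin (x-y)| < 0.16 := by
    intro x y hx hy
    rw [Real.sin_sub]
    calc _ ≤ |Real.sin x * Real.cos y| + |Real.cos x * Real.sin y| := abs_sub _ _
      _ = |Real.sin x| * |Real.cos y| + |Real.cos x| * |Real.sin y| := by rw [abs_mul, abs_mul]
      _ ≤ |Real.sin x| * 1 + 1 * |Real.sin y| := by
        gcongr
        · exact Real.abs_cos_le_one _
        · exact Real.abs_cos_le_one _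
      _ < 0.16 := by linarith
  have p1 : ∀ i : ℝ, Csum n ((i+1)*θ) ≤ 6.75 ∨ Csum n (i*θ) ≤ 6.75 := by
    intro i
    rcases (dich ((i+1)*θ)).2 with h | h
    · exact Or.inl h
    rcases (dich (i*θ)).2 with h' | h'
    · exact Or.inr h'
    have := diff _ _ h h'
    rw [show (i+1)*θ/2 - i*θ/2 = θ/2 by ring] at this
    linarith
  have p2 : ∀ i : ℝ, Csum n ((i+2)*θ) ≤ 6.75 ∨ Csum n (i*θ) ≤ 6.75 := by
    intro i
    rcases (dich ((i+2)*θ)).2 with h | h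
    · exact Or.inl h
    rcases (dich (i*θ)).2 with h' | h'
    · exact Or.inr h'
    have := diff _ _ h h'
    rw [show (i+2)*θ/2 - i*θ/2 = θ by ring] at this
    linarith
  have a3 := (dich (3*θ)).1
  have a4 := (dich (4*θ)).1
  have a5 := (dich (5*θ)).1
  have a6 := (dich (6*θ)).1
  have a7 := (dich (7*θ)).1
  have a8 := (dich (8*θ)).1
  have q34 := p1 3
  have q45 := p1 4
  have q35 := p2 3
  have q67 := p1 6
  have q78 := p1 7
  have q68 := p2 6
  norm_num1 at c1 c2 q34 q45 q35 q67 q78 q68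
  have s1 : 0.2115 * Csum n (3*θ) + 0.135 * Csum n (4*θ) + 0.089 * Csum n (5*θ) ≤ 0.2115 * B + 0.224 * 6.75 := by
    rcases q34 with h | h <;> rcases q45 with h' | h' <;> rcases q35 with h'' | h'' <;> linarith
  have s2 : 0.0573 * Csum n (6*θ) + 0.0333 * Csum n (7*θ) + 0.0146 * Csum n (8*θ) ≤ 0.0573 * B + 0.0479 * 6.75 := by
    rcases q67 with h | h <;> rcases q78 with h' | h' <;> rcases q68 with h'' | h'' <;> linarith
  linarith

lemma sup_out (n : ℕ) (hn : 600 ≤ n) (θ : ℝ) (h0 : 2*Real.pi/n ≤ θ) (h1 : θ ≤ Real.pi) :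
    |FF n θ| ≤ Real.exp (0.1605 * n) := by
  have hp := Real.pi_pos
  have hn' : (600:ℝ) ≤ n := by exact_mod_cast hn
  have hθ : 0 < θ := lt_of_lt_of_le (by positivity) h0
  have hs1 : 0 ≤ Real.sin (θ/2) := Real.sin_nonneg_of_nonneg_of_le_pi (by linarith) (by linarith)
  have hs2 : 0 ≤ Real.sin θ := Real.sin_nonneg_of_nonneg_of_le_pi (by linarith) (by linarith)
  rcases lt_or_ge (Real.sin (θ/2)) 0.16 with h | h
  · have := sin_small (θ/2) (by linarith) (by linarith) h
    exact region1 n hn θ h0 (by linarith)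
  rcases lt_or_ge (Real.sin θ) 0.16 with h' | h'
  · rcases le_total θ (Real.pi/2) with h2 | h2
    · have := Real.sin_le_sin_of_le_of_le_pi_div_two (x := θ/2) (y := θ) (by linarith) h2 (by linarith)
      linarith
    · have := sin_small (Real.pi - θ) (by linarith) (by linarith) (by rw [Real.sin_pi_sub]; exact h')
      exact region2 n hn θ (Real.pi - θ) (by ring) (by linarith) this
  · exact region3 n hn θ (by rwa [abs_of_nonneg hs1]) (by rwa [abs_of_nonneg hs2])

/-! ### Powers of sine over an interval -/

lemma wallis_le (M : ℕ) : (∏ i ∈ Finset.range M, ((2 * i + 1 : ℝ) / (2 * i + 2))) ^ 2 * (3 * M + 1) ≤ 1 := by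
  induction M with
  | zero => simp
  | succ M ih =>
    rw [Finset.prod_range_succ, mul_pow]
    have h : ((2 * M + 1 : ℝ) / (2 * M + 2))^2 * (3 * (M+1 : ℕ) + 1) ≤ 3 * M + 1 := by
      rw [div_pow, div_mul_eq_mul_div, div_le_iff₀ (by positivity)]
      push_cast
      have : (0:ℝ) ≤ M := Nat.cast_nonneg M
      nlinarith
    have h0 : 0 ≤ (∏ i ∈ Finset.range M, ((2 * i + 1 : ℝ) / (2 * i + 2))) ^ 2 := by positivity
    nlinarith [mul_le_mul_of_nonneg_left h h0]

lemma sin_pow_int (M : ℕ) (α x : ℝ) (J : ℕ) (hx : x ≤ J * Real.pi) (hx0 : 0 ≤ x) :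
    ∫ t in α..(α + x), Real.sin t ^ (2*M) ≤ J * (Real.pi * ∏ i ∈ Finset.range M, ((2 * i + 1 : ℝ) / (2 * i + 2))) := by
  have hper : Function.Periodic (fun t => Real.sin t ^ (2*M)) Real.pi := by
    intro t
    simp only [Real.sin_add_pi, pow_mul, neg_sq]
  have hc : Continuous (fun t => Real.sin t ^ (2*M)) := by fun_prop
  have h1 : ∫ t in α..(α + x), Real.sin t ^ (2*M) ≤ ∫ t in α..(α + (J:ℤ) • Real.pi), Real.sin t ^ (2*M) := by
    apply intervalIntegral.integral_mono_interval le_rfl (by linarith)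
    · simpa using hx
    · filter_upwards with t
      rw [pow_mul]
      positivity
    · exact hc.intervalIntegrable _ _
  refine h1.trans (le_of_eq ?_)
  rw [hper.intervalIntegral_add_zsmul_eq J α, hper.intervalIntegral_add_eq α 0, zero_add, integral_sin_pow_even]
  · simp
  · intro a b; exact hc.intervalIntegrable _ _

lemma sin_pow_I (M n : ℕ) (hn : 1 ≤ n) (α q : ℝ) (hq : (n:ℝ)/2 ≤ q) :
    ∫ θ in (0:ℝ)..(2*Real.pi/n), Real.sin (q/2 * θ + α) ^ (2*M) ≤
      (4 * Real.pi / n) * ∏ i ∈ Finset.range M, ((2 * i + 1 : ℝ) / (2 * i + 2)) := by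
  have hp := Real.pi_pos
  have hn' : (1:ℝ) ≤ n := by exact_mod_cast hn
  have hn0 : (0:ℝ) < n := by linarith
  have hq0 : 0 < q := by linarith
  rw [intervalIntegral.integral_comp_mul_add (fun t => Real.sin t ^ (2*M)) (by positivity : q/2 ≠ 0) α]
  set w := ∏ i ∈ Finset.range M, ((2 * i + 1 : ℝ) / (2 * i + 2)) with hw
  have hw0 : 0 ≤ w := by rw [hw]; positivity
  set J := ⌈q/n⌉₊ with hJ
  have hJ1 : q/n ≤ J := Nat.le_ceil _
  have hJ2 : (J:ℝ) ≤ 2 * (q/n) := by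
    rcases le_total (q/n) 1 with h | h
    · have : J ≤ 1 := by rw [hJ]; exact Nat.ceil_le.2 (by simpa using h)
      have h2 : (J:ℝ) ≤ 1 := by exact_mod_cast this
      have : (1:ℝ)/2 ≤ q/n := by rw [div_le_div_iff₀ (by norm_num) hn0]; linarith
      linarith
    · have := Nat.ceil_lt_add_one (a := q/n) (by positivity)
      linarith
  have h := sin_pow_int M α (q/2 * (2*Real.pi/n)) J (by
    calc q/2 * (2*Real.pi/n) = (q/n) * Real.pi := by ring
      _ ≤ _ := by gcongr) (by positivity)
  rw [mul_zero, zero_add, smul_eq_mul, add_comm (q/2 * (2*Real.pi/n)) α]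
  calc _ ≤ (q/2)⁻¹ * (J * (Real.pi * w)) := by gcongr
    _ ≤ (q/2)⁻¹ * (2 * (q/n) * (Real.pi * w)) := by gcongr
    _ = _ := by field_simp; ring

lemma w_bound (n : ℕ) (hn : 600 ≤ n) (w : ℝ) (hw0 : 0 ≤ w) (hw : w^2 * (3 * (126 * n : ℕ) + 1) ≤ 1) :
    4 * Real.pi / n * w ≤ 1.94 / (n * Real.sqrt n) / 3 := by
  have hn' : (600:ℝ) ≤ n := by exact_mod_cast hn
  have hn0 : (0:ℝ) < n := by linarith
  set r := Real.sqrt n with hr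
  have hr2 : r^2 = n := Real.sq_sqrt hn0.le
  have hr0 : 0 < r := Real.sqrt_pos.2 hn0
  have h1 : w * r ≤ 1/19.442 := by
    apply le_of_sq_le_sq _ (by norm_num)
    rw [mul_pow, hr2]
    push_cast at hw
    have : 0 ≤ w^2 := sq_nonneg w
    norm_num
    nlinarith
  have hp := Real.pi_lt_d6
  rw [div_div, div_mul_eq_mul_div, div_le_div_iff₀ hn0 (by positivity)]
  have h2 : Real.pi * (w*r) ≤ 3.141593 * (1/19.442) := by
    apply mul_le_mul hp.le h1 (by positivity) (by norm_num)
  have h3 := mul_le_mul_of_nonneg_left h2 hn0.le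
  nlinarith

lemma num_bound (n s : ℕ) (hs : s = n / 4) (hn : 600 ≤ n) (hev : Even n) :
    (n:ℝ)^3 * Real.sqrt n * Real.exp (0.1605 * n) ≤ 0.4 * (1.839 * Real.sqrt s * Real.exp (0.7918 * s)) := by
  have hs1 : 150 ≤ s := by omega
  have hs0 : (150:ℝ) ≤ s := by exact_mod_cast hs1
  have hns : n ≤ 4*s+2 := by obtain ⟨k, rfl⟩ := hev; omega
  have hns' : (n:ℝ) ≤ 4*s+2 := by exact_mod_cast hns
  have h1 : Real.sqrt n ≤ 2.01 * Real.sqrt s := by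
    rw [show (2.01:ℝ) = Real.sqrt (2.01^2) by rw [Real.sqrt_sq (by norm_num)], ← Real.sqrt_mul (by norm_num)]
    apply Real.sqrt_le_sqrt
    linarith
  have h2 : (n:ℝ) ≤ 602 * Real.exp ((s-150)/150) := by
    have := Real.add_one_le_exp (((s:ℝ)-150)/150)
    linarith
  have h3 : (n:ℝ)^3 ≤ 602^3 * Real.exp (3*((s-150)/150)) := by
    calc (n:ℝ)^3 ≤ (602 * Real.exp ((s-150)/150))^3 := by gcongr
      _ = _ := by rw [mul_pow, ← Real.exp_nat_mul]; push_cast; rfl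
  have h4 : Real.exp (0.1605 * n) ≤ Real.exp (0.1605 * (4*s+2)) := by
    apply Real.exp_le_exp.2; linarith
  have h5 : (3500000000:ℝ) ≤ Real.exp 22 := by
    have := Real.exp_one_gt_d9
    calc (3500000000:ℝ) ≤ 2.7182818283^22 := by norm_num
      _ ≤ (Real.exp 1)^22 := by gcongr
      _ = _ := by rw [← Real.exp_nat_mul]; norm_num
  have h6 : Real.exp 0.321 ≤ 1.5 := by
    rw [← Real.le_log_iff_exp_le (by norm_num)]
    have h := Real.log_two_gt_d9
    have h' : Real.log 1.5 = - Real.log (2/3) := by rw [← Real.log_inv]; norm_num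
    rw [h']
    have := Real.log_le_sub_one_of_pos (show (0:ℝ) < 2/3 by norm_num)
    linarith
  calc (n:ℝ)^3 * Real.sqrt n * Real.exp (0.1605 * n)
      ≤ (602^3 * Real.exp (3*((s-150)/150))) * (2.01 * Real.sqrt s) * Real.exp (0.1605 * (4*s+2)) := by gcongr
    _ = 602^3 * 2.01 * Real.sqrt s * (Real.exp (3*((s-150)/150)) * Real.exp (0.642 * s) * Real.exp 0.321) := by
        rw [show (0.1605:ℝ) * (4*s+2) = 0.642*s + 0.321 by ring, Real.exp_add]; ring
    _ ≤ 602^3 * 2.01 * Real.sqrt s * (Real.exp (3*((s-150)/150)) * Real.exp (0.642 * s) * 1.5) := by gcongr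
    _ ≤ 602^3 * 2.01 * Real.sqrt s * (Real.exp (0.7918*s - 22) * 1.5) := by
        rw [← Real.exp_add]
        gcongr
        linarith
    _ = (602^3 * 2.01 * 1.5) * Real.sqrt s * Real.exp (0.7918*s) / Real.exp 22 := by
        rw [Real.exp_sub]; ring
    _ ≤ _ := by
        rw [div_le_iff₀ (Real.exp_pos _)]
        have : 0 ≤ Real.sqrt s * Real.exp (0.7918*s) := by positivity
        nlinarith

/-! ### Assembly -/

lemma inner_small (n : ℕ) (hn : 600 ≤ n) (θ0 : ℝ) (hl : Real.pi / n ≤ θ0) (hu : n * θ0 / 2 ≤ 2.652)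
    (hF0 : 0 ≤ FF n θ0)
    (q0 q σ : ℝ) (hq0 : 0 ≤ q0) (hq1 : q0 ≤ 1/2) (hq : q0 + 1 ≤ q) (hqn : q + q0 ≤ n/2) (hσ : σ = 1 ∨ σ = -1) :
    2.7 * (FF n θ0 / ((n:ℝ)^3 * Real.sqrt n)) ≤
      ∫ θ in (0:ℝ)..(2 * Real.pi / n), FF n θ * (Real.cos (q0 * θ) + σ * Real.cos (q * θ)) := by
  have hn' : (600:ℝ) ≤ n := by exact_mod_cast hn
  have hn0 : (0:ℝ) < n := by linarith
  have hp := Real.pi_gt_d6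
  have hp2 := Real.pi_lt_d6
  have hw : ∀ θ, θ0 - 0.06 / n ≤ θ → θ ≤ θ0 + 0.06 / n → 0.98 * Real.pi ≤ n * θ ∧ n * θ / 2 ≤ 2.682 := by
    intro θ h1 h2
    rw [div_le_iff₀ hn0] at hl
    have e : (0.06 / (n:ℝ)) * n = 0.06 := by field_simp
    constructor <;> nlinarith
  have hI : ∀ θ : ℝ, θ ≤ 2 * Real.pi / n → n * θ / 2 ≤ Real.pi := by
    intro θ h
    rw [le_div_iff₀ hn0] at h
    linarith
  have hcont : Continuous (fun θ => Real.cos (q0 * θ) + σ * Real.cos (q * θ)) := by fun_prop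
  have hm := mass n hn θ0 hl hu (fun θ => Real.cos (q0 * θ) + σ * Real.cos (q * θ)) hcont (1.9/(n:ℝ)^2) (by positivity) ?_ ?_
  · refine le_trans ?_ hm
    have e : 1.9/(n:ℝ)^2 * (1.94 * FF n θ0 / (n * Real.sqrt n)) = 3.686 * (FF n θ0 / ((n:ℝ)^3 * Real.sqrt n)) := by
      field_simp; norm_num; ring
    rw [e]
    gcongr
    norm_num
  · intro θ h0 h1
    have h2 := hI θ h1
    have hqθ : q * θ ≤ Real.pi := by nlinarith
    rcases hσ with rfl | rfl
    · have h3 : Real.cos (Real.pi - q * θ) ≤ Real.cos (q0 * θ) := by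
        apply Real.cos_le_cos_of_nonneg_of_le_pi (by positivity) (by nlinarith) (by nlinarith)
      rw [Real.cos_pi_sub] at h3
      simp only [one_mul]
      linarith
    · have h3 : Real.cos (q * θ) ≤ Real.cos (q0 * θ) := by
        apply Real.cos_le_cos_of_nonneg_of_le_pi (by positivity) hqθ (by nlinarith)
      simp only [neg_mul, one_mul]
      linarith
  · intro θ h0 h1
    obtain ⟨h2, h3⟩ := hw θ h0 h1
    have hθ : 0 < θ := by
      by_contra h
      push Not at h
      nlinarith
    have hθs : θ ≤ 0.01 := by nlinarith
    have hg : 1.9/(n:ℝ)^2 ≤ 0.0001 := by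
      rw [div_le_iff₀ (by positivity)]; nlinarith
    rcases hσ with rfl | rfl
    · have hqθ : q * θ ≤ 2.682 := by nlinarith
      have h4 : Real.cos 2.682 ≤ Real.cos (q * θ) :=
        Real.cos_le_cos_of_nonneg_of_le_pi (by nlinarith) (by linarith) hqθ
      have h5 : -0.9 ≤ Real.cos 2.682 := by
        have h6 := cos_le_quartic 0.4595 (by norm_num)
        have h7 : Real.cos (Real.pi - 2.682) ≤ Real.cos 0.4595 :=
          Real.cos_le_cos_of_nonneg_of_le_pi (by norm_num) (by linarith) (by linarith)
        rw [Real.cos_pi_sub] at h7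
        norm_num at h6 h7 ⊢
        linarith
      have h8 := Real.one_sub_sq_div_two_le_cos (x := q0 * θ)
      have h9 : q0 * θ ≤ 0.01 := by nlinarith
      have h10 : 0 ≤ q0 * θ := by positivity
      simp only [one_mul]
      nlinarith
    · have hqθ : q * θ ≤ Real.pi := by nlinarith
      have h4 : Real.cos (q * θ) ≤ Real.cos ((q0+1) * θ) :=
        Real.cos_le_cos_of_nonneg_of_le_pi (by positivity) hqθ (by nlinarith)
      have h5 : Real.cos (q0 * θ) - Real.cos ((q0+1) * θ) = 2 * Real.sin ((q0+1/2)*θ) * Real.sin (θ/2) := by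
        rw [Real.cos_sub_cos, show (q0*θ + (q0+1)*θ)/2 = (q0+1/2)*θ by ring, show (q0*θ - (q0+1)*θ)/2 = -(θ/2) by ring, Real.sin_neg]
        ring
      have h6 := Real.mul_le_sin (x := θ/2) (by linarith) (by linarith)
      have h7 := Real.mul_le_sin (x := (q0+1/2)*θ) (by positivity) (by nlinarith)
      have h8 : 2 / Real.pi * (θ/2) ≤ Real.sin ((q0+1/2)*θ) := by
        refine le_trans ?_ h7
        gcongr
        nlinarith
      have h9 : (2 / Real.pi * (θ/2)) * (2 / Real.pi * (θ/2)) ≤ Real.sin ((q0+1/2)*θ) * Real.sin (θ/2) :=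
        mul_le_mul h8 h6 (by positivity) (le_trans (by positivity) h8)
      have h10 : 0.98 / n ≤ 2 / Real.pi * (θ/2) := by
        rw [show 2 / Real.pi * (θ/2) = θ / Real.pi by ring, div_le_div_iff₀ hn0 Real.pi_pos]
        linarith
      have h11 : (0.98 / (n:ℝ)) * (0.98 / n) ≤ (2 / Real.pi * (θ/2)) * (2 / Real.pi * (θ/2)) := by gcongr
      have h12 : 1.9/(n:ℝ)^2 ≤ 2 * ((0.98 / (n:ℝ)) * (0.98 / n)) := by
        rw [show 2 * ((0.98 / (n:ℝ)) * (0.98 / n)) = 1.9208/(n:ℝ)^2 by field_simp; norm_num]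
        gcongr
        norm_num
      simp only [neg_mul, one_mul]
      linarith

lemma inner_large (n : ℕ) (hn : 600 ≤ n) (θ0 : ℝ) (hl : Real.pi / n ≤ θ0) (hu : n * θ0 / 2 ≤ 2.652)
    (hF0 : 0 ≤ FF n θ0) (hmax : ∀ θ, 0 ≤ θ → θ ≤ 2 * Real.pi / n → FF n θ ≤ FF n θ0)
    (q0 q σ : ℝ) (hq0 : 0 ≤ q0) (hq1 : q0 ≤ 1/2) (hq : (n:ℝ)/2 ≤ q) (hσ : σ = 1 ∨ σ = -1) :
    2.7 * (FF n θ0 / ((n:ℝ)^3 * Real.sqrt n)) ≤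
      ∫ θ in (0:ℝ)..(2 * Real.pi / n), FF n θ * (Real.cos (q0 * θ) + σ * Real.cos (q * θ)) := by
  have hn' : (600:ℝ) ≤ n := by exact_mod_cast hn
  have hn0 : (0:ℝ) < n := by linarith
  have hp := Real.pi_gt_d6
  have hp2 := Real.pi_lt_d6
  have hI0 : 0 ≤ 2 * Real.pi / n := by positivity
  obtain ⟨α, hα⟩ : ∃ α : ℝ, ∀ θ, σ * Real.cos (q * θ) = 1 - 2 * Real.sin (q/2 * θ + α)^2 := by
    rcases hσ with rfl | rfl
    · refine ⟨0, fun θ => ?_⟩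
      rw [Real.sin_sq_eq_half_sub, show 2 * (q/2*θ + 0) = q * θ by ring]; ring
    · refine ⟨Real.pi/2, fun θ => ?_⟩
      rw [Real.sin_sq_eq_half_sub, show 2 * (q/2*θ + Real.pi/2) = q * θ + Real.pi by ring, Real.cos_add_pi]; ring
  set K : ℕ := 126 * n with hK
  have hK0 : (K:ℝ) = 126 * n := by rw [hK]; push_cast; ring
  have hKp : (0:ℝ) < K := by rw [hK0]; positivity
  set F0 := FF n θ0 with hF0d
  set S := ∫ θ in (0:ℝ)..(2 * Real.pi / n), FF n θ with hS
  set W := ∫ θ in (0:ℝ)..(2 * Real.pi / n), Real.sin (q/2 * θ + α) ^ (2*K) with hW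
  have hmS : 1.94 * F0 / (n * Real.sqrt n) ≤ S := by
    have := mass n hn θ0 hl hu (fun _ => 1) continuous_const 1 zero_le_one (fun _ _ _ => zero_le_one) (fun _ _ _ => le_rfl)
    simpa using this
  have hWb : F0 * W ≤ 1.94 * F0 / (n * Real.sqrt n) / 3 := by
    have h1 := sin_pow_I K n (by omega) α q hq
    have h2 := w_bound n hn _ (by positivity) (wallis_le K)
    calc F0 * W ≤ F0 * (1.94 / (n * Real.sqrt n) / 3) := by
          apply mul_le_mul_of_nonneg_left (h1.trans h2) hF0
      _ = _ := by ring
  have hFc := FF_cont n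
  have hlow : ∫ θ in (0:ℝ)..(2 * Real.pi / n), ((2/K - Real.pi^2/(2*n^2)) * FF n θ - (2/K * F0) * Real.sin (q/2 * θ + α) ^ (2*K))
      ≤ ∫ θ in (0:ℝ)..(2 * Real.pi / n), FF n θ * (Real.cos (q0 * θ) + σ * Real.cos (q * θ)) := by
    apply intervalIntegral.integral_mono_on hI0
    · apply Continuous.intervalIntegrable; fun_prop
    · apply Continuous.intervalIntegrable; fun_prop
    intro θ hθ
    obtain ⟨h0, h1⟩ := hθ
    have hF := FF_nonneg n θ h0 h1
    have hFm := hmax θ h0 h1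
    have hb := one_add_mul_le_pow (a := Real.sin (q/2 * θ + α)^2 - 1) (by nlinarith [sq_nonneg (Real.sin (q/2 * θ + α))]) K
    rw [add_sub_cancel, ← pow_mul] at hb
    set y := Real.sin (q/2 * θ + α)^2 with hy
    set Y := Real.sin (q/2 * θ + α)^(2*K) with hY
    have hY0 : 0 ≤ Y := by rw [hY, pow_mul]; positivity
    have hg : 2/K * (1 - Y) ≤ 2 * (1 - y) := by
      rw [div_mul_eq_mul_div, div_le_iff₀ hKp]; linarith
    have hc := Real.one_sub_sq_div_two_le_cos (x := q0 * θ)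
    have hc2 : (q0 * θ)^2/2 ≤ Real.pi^2/(2*n^2) := by
      have : q0 * θ ≤ 1/2 * (2 * Real.pi / n) := by gcongr
      have h3 : 0 ≤ q0 * θ := by positivity
      calc (q0 * θ)^2/2 ≤ (1/2 * (2 * Real.pi / n))^2/2 := by gcongr
        _ = _ := by ring
    have hmain : 2/K * (1 - Y) - Real.pi^2/(2*n^2) ≤ Real.cos (q0 * θ) + σ * Real.cos (q * θ) := by
      rw [hα θ]; linarith
    have h4 := mul_le_mul_of_nonneg_left hmain hF
    have h5 : 2/K * (FF n θ * Y) ≤ 2/K * (F0 * Y) := by gcongr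
    linarith
  rw [intervalIntegral.integral_sub, intervalIntegral.integral_const_mul, intervalIntegral.integral_const_mul, ← hS, ← hW] at hlow
  rotate_left
  · apply Continuous.intervalIntegrable; fun_prop
  · apply Continuous.intervalIntegrable; fun_prop
  refine le_trans ?_ hlow
  set m0 := 1.94 * F0 / (n * Real.sqrt n) with hm0
  have hm00 : 0 ≤ m0 := by positivity
  have e1 : 2.7 * (F0 / ((n:ℝ)^3 * Real.sqrt n)) ≤ 1.4/(n:ℝ)^2 * m0 := by
    have : 1.4/(n:ℝ)^2 * m0 = 2.716 * (F0 / ((n:ℝ)^3 * Real.sqrt n)) := by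
      rw [hm0]; field_simp; norm_num; ring
    rw [this]
    gcongr
    norm_num
  have e2 : 1.4/(n:ℝ)^2 ≤ 2/K * (2/3) - Real.pi^2/(2*n^2) := by
    rw [hK0, show 2/(126 * (n:ℝ)) * (2/3) - Real.pi^2/(2*n^2) = (4/378 * n - Real.pi^2/2)/(n:ℝ)^2 by field_simp; norm_num; ring]
    gcongr
    nlinarith
  have hKi : 0 ≤ 2/(K:ℝ) := by positivity
  have e3 : 2/K * (F0 * W) ≤ 2/K * (S/3) := by gcongr; linarith
  have e4 : 1.4/(n:ℝ)^2 * m0 ≤ 1.4/(n:ℝ)^2 * S := by gcongr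
  have hS0 : 0 ≤ S := hm00.trans hmS
  have e5 := mul_le_mul_of_nonneg_right e2 hS0
  linarith

lemma pos_int (n : ℕ) (hn : 600 ≤ n) (hev : Even n) (p0 p : ℕ) (hp0 : p0 ≤ 1) (hp : p0 + 2 ≤ p) (σ : ℝ) (hσ : σ = 1 ∨ σ = -1) :
    0 < ∫ θ in (0:ℝ)..Real.pi, FF n θ * (Real.cos ((p0:ℝ)/2 * θ) + σ * Real.cos ((p:ℝ)/2 * θ)) := by
  have hn' : (600:ℝ) ≤ n := by exact_mod_cast hn
  have hn0 : (0:ℝ) < n := by linarith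
  have hpi := Real.pi_gt_d6
  have hpi2 := Real.pi_lt_d6
  obtain ⟨θ0, h0, h1, hmax, hcrit⟩ := peak_exists n (by omega)
  have hl := peak_lower n (by omega) θ0 h0 h1 hcrit
  have hu := peak_upper n (by omega) θ0 h0 h1 hcrit
  have hF0 := FF_pos n θ0 h0 h1
  have hp0' : (p0:ℝ) ≤ 1 := by exact_mod_cast hp0
  have hp' : (p0:ℝ) + 2 ≤ p := by exact_mod_cast hp
  have hp00 : (0:ℝ) ≤ p0 := Nat.cast_nonneg _
  set X := FF n θ0 / ((n:ℝ)^3 * Real.sqrt n) with hX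
  have hX0 : 0 < X := by positivity
  have hin : 2.7 * X ≤ ∫ θ in (0:ℝ)..(2 * Real.pi / n), FF n θ * (Real.cos ((p0:ℝ)/2 * θ) + σ * Real.cos ((p:ℝ)/2 * θ)) := by
    rcases lt_or_ge p n with h | h
    · have hpn : (p:ℝ) + 1 ≤ n := by exact_mod_cast h
      exact inner_small n hn θ0 hl hu hF0.le _ _ σ (by linarith) (by linarith) (by linarith) (by linarith) hσ
    · have hpn : (n:ℝ) ≤ p := by exact_mod_cast h
      exact inner_large n hn θ0 hl hu hF0.le hmax _ _ σ (by linarith) (by linarith) (by linarith) hσ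
  have he : Real.exp (0.1605 * n) ≤ 0.4 * X := by
    have h2 := num_bound n (n/4) rfl hn hev
    have h3 := F0_lower n (n/4) rfl hn hev
    have h4 : FF n (2 * Real.pi / (n + n/4 + 1 : ℕ)) ≤ FF n θ0 := by
      apply hmax _ (by positivity)
      have : (n:ℝ) ≤ (n + n/4 + 1 : ℕ) := by exact_mod_cast (by omega)
      gcongr
    rw [hX, mul_div_assoc', le_div_iff₀ (by positivity)]
    linarith
  have hle : 2 * Real.pi / n ≤ Real.pi := by
    rw [div_le_iff₀ hn0]; nlinarith
  have hpos : 0 ≤ 2 * Real.pi / n := by positivity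
  have hFc := FF_cont n
  have hcont : Continuous (fun θ => FF n θ * (Real.cos ((p0:ℝ)/2 * θ) + σ * Real.cos ((p:ℝ)/2 * θ))) := by fun_prop
  have hout : ‖∫ θ in (2 * Real.pi / n)..Real.pi, FF n θ * (Real.cos ((p0:ℝ)/2 * θ) + σ * Real.cos ((p:ℝ)/2 * θ))‖
      ≤ (Real.exp (0.1605 * n) * 2) * |Real.pi - 2 * Real.pi / n| := by
    apply intervalIntegral.norm_integral_le_of_norm_le_const
    intro θ hθ
    rw [Set.uIoc_of_le hle] at hθ
    rw [Real.norm_eq_abs, abs_mul]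
    have hb := sup_out n hn θ hθ.1.le hθ.2
    have hσ1 : |σ| = 1 := by rcases hσ with rfl | rfl <;> simp
    have hh : |Real.cos ((p0:ℝ)/2 * θ) + σ * Real.cos ((p:ℝ)/2 * θ)| ≤ 2 := by
      calc _ ≤ |Real.cos ((p0:ℝ)/2 * θ)| + |σ * Real.cos ((p:ℝ)/2 * θ)| := abs_add_le _ _
        _ ≤ 1 + 1 := by
          rw [abs_mul, hσ1, one_mul]
          exact add_le_add (Real.abs_cos_le_one _) (Real.abs_cos_le_one _)
        _ = 2 := by norm_num
    exact mul_le_mul hb hh (abs_nonneg _) (Real.exp_nonneg _)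
  rw [← intervalIntegral.integral_add_adjacent_intervals (hcont.intervalIntegrable 0 (2 * Real.pi / n)) (hcont.intervalIntegrable _ _)]
  rw [abs_of_nonneg (by linarith), Real.norm_eq_abs] at hout
  have h5 := (abs_le.1 hout).1
  have h6 : (Real.exp (0.1605 * n) * 2) * (Real.pi - 2 * Real.pi / n) ≤ (0.4 * X * 2) * 3.141593 := by
    apply mul_le_mul (by linarith) (by linarith) (by linarith) (by positivity)
  linarith

lemma large_n (n : ℕ) (hev : Even n) (hn : 600 ≤ n) :
    ∀ i < n * (n+1) / 4, (a n i).natAbs < (a n (n * (n+1) / 4)).natAbs := by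
  intro i hi
  have h2 := two_NN n
  set i0 := n * (n+1) / 4 with hi0
  have hN1 : 2 * i0 ≤ NN n := by omega
  have hN2 : NN n ≤ 2 * i0 + 1 := by omega
  obtain ⟨p0, hp0⟩ : ∃ p0, NN n = 2 * i0 + p0 := ⟨NN n - 2 * i0, by omega⟩
  obtain ⟨p, hp⟩ : ∃ p, NN n = 2 * i + p := ⟨NN n - 2 * i, by omega⟩
  have e0 := int_rep n hev i0 (by omega)
  have e1 := int_rep n hev i (by omega)
  have q0 : (NN n : ℝ)/2 - i0 = (p0:ℝ)/2 := by rw [hp0]; push_cast; ring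
  have q1 : (NN n : ℝ)/2 - i = (p:ℝ)/2 := by rw [hp]; push_cast; ring
  rw [q0] at e0
  rw [q1] at e1
  have hFc := FF_cont n
  have split : ∀ σ : ℝ, ∫ θ in (0:ℝ)..Real.pi, FF n θ * (Real.cos ((p0:ℝ)/2 * θ) + σ * Real.cos ((p:ℝ)/2 * θ))
      = (-1)^(n/2) * Real.pi * a n i0 + σ * ((-1)^(n/2) * Real.pi * a n i) := by
    intro σ
    rw [← e0, ← e1, ← intervalIntegral.integral_const_mul, ← intervalIntegral.integral_add]
    · congr 1; ext θ; ring
    · apply Continuous.intervalIntegrable; fun_prop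
    · apply Continuous.intervalIntegrable; fun_prop
  have s1 := pos_int n hn hev p0 p (by omega) (by omega) 1 (Or.inl rfl)
  have s2 := pos_int n hn hev p0 p (by omega) (by omega) (-1) (Or.inr rfl)
  rw [split] at s1 s2
  have hpi := Real.pi_pos
  have hlt : |(a n i : ℝ)| < |(a n i0 : ℝ)| := by
    have t1 : |(-1)^(n/2) * Real.pi * (a n i : ℝ)| < |(-1)^(n/2) * Real.pi * (a n i0 : ℝ)| :=
      lt_of_lt_of_le (abs_lt.2 ⟨by linarith, by linarith⟩) (le_abs_self _)
    rw [abs_mul, abs_mul _ (a n i0 : ℝ)] at t1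
    exact lt_of_mul_lt_mul_left t1 (abs_nonneg _)
  have : |a n i| < |a n i0| := by exact_mod_cast hlt
  rw [Int.abs_eq_natAbs, Int.abs_eq_natAbs] at this
  exact_mod_cast this

/-- For even `n` with `34 ≤ n ≤ 75000`, the least index attaining the maximum
absolute coefficient is `⌊n(n+1)/4⌋`, and `|a(n, ⌈n(n+1)/4⌉)| = M n` as well. -/
theorem stmt_7 (n : ℕ) (heven : Even n) (h1 : 34 ≤ n) (h2 : n ≤ 75000) :
    L n = n * (n + 1) / 4 ∧ (a n ((n * (n + 1) + 3) / 4)).natAbs = M n := by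
  apply reduction n heven
  rcases le_total n 600 with h | h
  · exact small_n n heven h1 h
  · exact large_n n heven h
end
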